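/- Let ν be a rational number that is not a negative integer. Then for all but finitely many k ∈ ℤ₊, the Laguerre polynomial L_k^ν is irreducible over ℚ. -/

import Mathlib

/-!
Write `ν = u / v` in lowest terms. The rescaled polynomial `v^n n! L_n^ν(-x/v)` is monic, with
integral coefficients `binom(n, j) ∏_{j < i ≤ n} (v i + u)`. The Newton polygon at a prime `p`
rules out a factor of degree `k ≤ n / 2` if `p` divides a term `v i + u` with `n - k < i ≤ n` and
all slopes are less than `1 / k`. The latter holds if `p` exceeds `K = k + 1 + v + |u|` and divides
none of the first `K` terms.

If `k` is large, such a prime exists: otherwise comparing the `k` last terms with the first `K`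
ones, as in Erdős' proof of Sylvester's theorem, yields a bound
`binom(n, k) ≤ n^O(1) · K# · n^(2 π(Y))`. For `k ≤ n^(3/4)` one can take `Y = O(k)`, and the bound
fails because `π(Y) = o(Y)`. For larger `k` one can take `Y = O(√n)`, and the bound fails because
`binom(n, k)` is at least `4^k / n`, whereas `K# = O((7/2)^K)`.

If `k` is bounded, it suffices that `n (v n + u)` has a prime divisor tending to infinity with `n`.
This amounts to the finiteness of the set of `x` such that `x` and `x + h` are both composed of
primes less than a fixed bound. By pigeonhole on the exponents modulo `6`, infinitely many such
`x` would give too good rational approximations to the sixth root of a single number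
`(a + h) / a` with `a` as large as desired, whereas the diagonal Padé approximants to `x^(1/r)`
show that the `r`-th root of a number so close to `1` has irrationality measure at most `5`.
-/

open Polynomial Finset

noncomputable section

/-- The Laguerre polynomial `L_k^ν(x) = ∑_{j=0}^{k} binom(ν+k, k−j) (−x)^j / j!`
with rational parameter `ν`, as a polynomial over `ℚ`.  Here the generalized
binomial coefficient is `binom(ν+k, k-j) = (∏_{i<k-j} (ν+k-i)) / (k-j)!`. -/
def laguerre (ν : ℚ) (k : ℕ) : Polynomial ℚ :=
  ∑ j ∈ Finset.range (k + 1),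
    Polynomial.C ((∏ i ∈ Finset.range (k - j), (ν + (k : ℚ) - (i : ℚ))) / ((k - j).factorial : ℚ)
        * (-1) ^ j / (j.factorial : ℚ)) * Polynomial.X ^ j

lemma apply_coeff_mul_pow_le_of_mul {R : Type*} [Ring R] {v : AbsoluteValue R ℝ}
    (hna : IsNonarchimedean v) {c : ℝ} (hc : 0 < c) {f g : R[X]} (h0 : (f * g).coeff 0 ≠ 0)
    (h : ∀ j, v ((f * g).coeff j) * c ^ j ≤ v ((f * g).coeff 0)) (j : ℕ) :
    v (f.coeff j) * c ^ j ≤ v (f.coeff 0) := by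
  rw [mul_coeff_zero] at h0
  have hg : 0 < v (g.coeff 0) := v.pos (right_ne_zero_of_mul h0)
  have hgN : v (g.coeff 0) ≤ g.gaussNorm v c := by simpa using g.le_gaussNorm v hc.le 0
  obtain ⟨i, hi⟩ := (f * g).exists_eq_gaussNorm v c
  refine (f.le_gaussNorm v hc.le j).trans (le_of_mul_le_mul_right ?_ hg)
  calc f.gaussNorm v c * v (g.coeff 0)
      ≤ f.gaussNorm v c * g.gaussNorm v c :=
        mul_le_mul_of_nonneg_left hgN (f.gaussNorm_nonneg v hc.le)
    _ = v ((f * g).coeff i) * c ^ i := by rw [← gaussNorm_mul hna hc, hi]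
    _ ≤ v (f.coeff 0) * v (g.coeff 0) := by rw [← map_mul, ← mul_coeff_zero]; exact h i

lemma dvd_coeff_zero_of_dvd_coeff_mul {p : ℕ} (hp : p.Prime) {f g : ℤ[X]} (hg : g.Monic) {m : ℕ}
    (hm : g.natDegree < m) (h : ∀ j < m, (p : ℤ) ∣ (f * g).coeff j) : (p : ℤ) ∣ f.coeff 0 := by
  have : Fact p.Prime := ⟨hp⟩
  have dvd_iff (q : ℤ[X]) (j : ℕ) :
      (q.map (Int.castRingHom (ZMod p))).coeff j = 0 ↔ (p : ℤ) ∣ q.coeff j := by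
    rw [coeff_map, eq_intCast, ZMod.intCast_zmod_eq_zero_iff_dvd]
  have hX : (X : (ZMod p)[X]) ^ m ∣
      f.map (Int.castRingHom (ZMod p)) * g.map (Int.castRingHom (ZMod p)) := by
    rw [X_pow_dvd_iff, ← Polynomial.map_mul]
    exact fun j hj => (dvd_iff _ j).2 (h j hj)
  by_contra hf
  rw [← dvd_iff, ← X_dvd_iff] at hf
  have hdeg := natDegree_le_of_dvd (prime_X.pow_dvd_of_dvd_mul_left _ hf hX) (hg.map _).ne_zero
  rw [natDegree_X_pow, hg.natDegree_map] at hdeg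
  omega

lemma padic_intCast {p : ℕ} [Fact p.Prime] {z : ℤ} (hz : z ≠ 0) :
    Rat.AbsoluteValue.padic p z = (p : ℝ) ^ (-(padicValInt p z : ℝ)) := by
  rw [Rat.AbsoluteValue.padic_eq_padicNorm,
    padicNorm.eq_zpow_of_nonzero (Int.cast_ne_zero.2 hz), padicValRat.of_int, Rat.cast_zpow,
    ← Real.rpow_intCast]
  simp

lemma padicValInt_coeff_zero_le_of_mul {p : ℕ} (hp : p.Prime) {f g : ℤ[X]} {s : ℝ}
    (h0 : (f * g).coeff 0 ≠ 0) (h : ∀ j, (f * g).coeff j ≠ 0 →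
      (padicValInt p ((f * g).coeff 0) : ℝ) ≤ padicValInt p ((f * g).coeff j) + s * j)
    {j : ℕ} (hj : f.coeff j ≠ 0) :
    (padicValInt p (f.coeff 0) : ℝ) ≤ padicValInt p (f.coeff j) + s * j := by
  have : Fact p.Prime := ⟨hp⟩
  have hp0 : (0 : ℝ) < p := by exact_mod_cast hp.pos
  have hp1 : (1 : ℝ) < p := by exact_mod_cast hp.one_lt
  let v : AbsoluteValue ℤ ℝ :=
    (Rat.AbsoluteValue.padic p).comp (f := Int.castRingHom ℚ) Int.cast_injective
  have hna : IsNonarchimedean v := fun x y => by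
    change (padicNorm p ((x + y : ℤ) : ℚ) : ℝ) ≤ max (padicNorm p x : ℝ) (padicNorm p y)
    rw [Int.cast_add, ← Rat.cast_max, Rat.cast_le]
    exact padicNorm.nonarchimedean
  have hle_iff {x y : ℤ} (hx : x ≠ 0) (hy : y ≠ 0) (i : ℕ) :
      v x * ((p : ℝ) ^ (-s)) ^ i ≤ v y ↔ (padicValInt p y : ℝ) ≤ padicValInt p x + s * i := by
    have hv {z : ℤ} (hz : z ≠ 0) : v z = (p : ℝ) ^ (-(padicValInt p z : ℝ)) := padic_intCast hz
    rw [hv hx, hv hy, ← Real.rpow_mul_natCast hp0.le, ← Real.rpow_add hp0,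
      Real.rpow_le_rpow_left_iff hp1]
    constructor <;> intro <;> linarith
  have hf0 : f.coeff 0 ≠ 0 := by rw [mul_coeff_zero] at h0; exact left_ne_zero_of_mul h0
  refine (hle_iff hj hf0 j).1
    (apply_coeff_mul_pow_le_of_mul hna (Real.rpow_pos_of_pos hp0 _) h0 (fun i => ?_) j)
  rcases eq_or_ne ((f * g).coeff i) 0 with hi | hi
  · rw [hi, map_zero, zero_mul]
    exact v.nonneg _
  · exact (hle_iff hi h0 i).2 (h i hi)

/-- A factor of degree `k` whose constant term is divisible by `p` forces a slope at least `1 / k`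
in the `p`-adic Newton polygon of the product. -/
lemma not_dvd_coeff_zero_of_slope_lt {p : ℕ} (hp : p.Prime) {f g : ℤ[X]} (hf : f.Monic)
    (hdeg : 1 ≤ f.natDegree) (h0 : (f * g).coeff 0 ≠ 0)
    (hslope : ∀ j, 1 ≤ j → (f * g).coeff j ≠ 0 →
      f.natDegree * padicValInt p ((f * g).coeff 0) <
        f.natDegree * padicValInt p ((f * g).coeff j) + j) : ¬ (p : ℤ) ∣ f.coeff 0 := by
  have : Fact p.Prime := ⟨hp⟩
  intro hdvd
  set k := f.natDegree with hk
  set n := (f * g).natDegree with hn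
  have hkn : k ≤ n := natDegree_le_of_dvd (dvd_mul_right f g) (by rintro h; simp [h] at h0)
  have hk0 : (0 : ℝ) < k := by exact_mod_cast hdeg
  have hn0 : (0 : ℝ) < n := by exact_mod_cast hdeg.trans hkn
  -- A slope `i / j < 1 / k` with `j ≤ n` is at most `(1 - 1 / n) / k`, as `k * i ≤ j - 1`.
  have hle (j : ℕ) (hj : (f * g).coeff j ≠ 0) : (padicValInt p ((f * g).coeff 0) : ℝ) ≤
      padicValInt p ((f * g).coeff j) + (1 - 1 / n) / k * j := by
    rcases Nat.eq_zero_or_pos j with rfl | hj1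
    · simp
    have hjn : (j : ℝ) / n ≤ 1 :=
      div_le_one_of_le₀ (by exact_mod_cast le_natDegree_of_ne_zero hj) hn0.le
    have hslope' : (k : ℝ) * padicValInt p ((f * g).coeff 0) + 1 ≤
      k * padicValInt p ((f * g).coeff j) + j := by exact_mod_cast hslope j hj1 hj
    refine le_of_mul_le_mul_left ?_ hk0
    calc (k : ℝ) * padicValInt p ((f * g).coeff 0)
        ≤ k * padicValInt p ((f * g).coeff j) + (j - j / n) := by linarith
      _ = k * (padicValInt p ((f * g).coeff j) + (1 - 1 / n) / k * j) := by field_simp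
  have hlast := padicValInt_coeff_zero_le_of_mul hp h0 hle
    (by rw [hf.coeff_natDegree]; exact one_ne_zero : f.coeff k ≠ 0)
  rw [hf.coeff_natDegree, padicValInt.one, Nat.cast_zero, zero_add,
    div_mul_cancel₀ _ hk0.ne'] at hlast
  have hone : 1 ≤ padicValInt p (f.coeff 0) := by
    have hf0 : f.coeff 0 ≠ 0 := by rw [mul_coeff_zero] at h0; exact left_ne_zero_of_mul h0
    exact ((padicValInt_dvd_iff 1 _).1 (by simpa using hdvd)).resolve_left hf0
  have hone' : (1 : ℝ) ≤ padicValInt p (f.coeff 0) := by exact_mod_cast hone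
  have : 0 < 1 / (n : ℝ) := by positivity
  linarith

section ArithmeticProgression

/-- The `i`-th term `v * i + u` of an arithmetic progression. Its terms of index `i ≥ 1` are the
numerators of the numbers `u / v + i` of which the coefficients of `L_k^(u/v)` are made up. -/
def apTerm (v : ℕ) (u : ℤ) (i : ℕ) : ℤ := v * i + u

/-- The absolute value of the product of the terms of index `i ∈ (a, b]` of an arithmetic
progression. -/
def apProd (v : ℕ) (u : ℤ) (a b : ℕ) : ℕ := ∏ i ∈ Ioc a b, (apTerm v u i).natAbs

/-- The number of multiples of `q` among the terms of index `i ∈ (a, b]` of an arithmetic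
progression. -/
def apCount (v : ℕ) (u : ℤ) (q a b : ℕ) : ℕ := #{i ∈ Ioc a b | (q : ℤ) ∣ apTerm v u i}

variable {v : ℕ} {u : ℤ}

lemma natAbs_apTerm_le (v : ℕ) (u : ℤ) {i b : ℕ} (hi : i ≤ b) :
    (apTerm v u i).natAbs ≤ v * b + u.natAbs := by
  refine (Int.natAbs_add_le _ _).trans (add_le_add_left ?_ _)
  rw [← Nat.cast_mul, Int.natAbs_natCast]
  exact Nat.mul_le_mul_left _ hi

lemma exists_dvd_apTerm_iff_modEq (u : ℤ) {q : ℕ} (hq : 0 < q) (hqv : q.Coprime v) :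
    ∃ c : ℕ, ∀ i, (q : ℤ) ∣ apTerm v u i ↔ i ≡ c [MOD q] := by
  have : NeZero q := ⟨hq.ne'⟩
  have hv : (v : ZMod q) * (v : ZMod q)⁻¹ = 1 := ZMod.coe_mul_inv_eq_one v hqv.symm
  refine ⟨(-(u : ZMod q) * (v : ZMod q)⁻¹).val, fun i => ?_⟩
  rw [← ZMod.natCast_eq_natCast_iff, ← ZMod.intCast_zmod_eq_zero_iff_dvd, ZMod.natCast_val,
    ZMod.cast_id, apTerm]
  push_cast
  constructor
  · intro h
    linear_combination (v : ZMod q)⁻¹ * h - (i : ZMod q) * hv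
  · intro h
    rw [h]
    linear_combination -(u : ZMod q) * hv

lemma abs_mul_apCount_sub_lt (u : ℤ) {q : ℕ} (hq : 0 < q) (hqv : q.Coprime v) {a b : ℕ}
    (hab : a ≤ b) : |(q * apCount v u q a b - (b - a) : ℤ)| < q := by
  obtain ⟨c, hc⟩ := exists_dvd_apTerm_iff_modEq u hq hqv
  have hq' : (0 : ℚ) < q := by exact_mod_cast hq
  have hle : ((a : ℚ) - c) / q ≤ (b - c) / q := by gcongr
  have hcount : (apCount v u q a b : ℤ) = ⌊((b : ℚ) - c) / q⌋ - ⌊((a : ℚ) - c) / q⌋ := by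
    simp_rw [apCount, hc]
    rw [Nat.Ioc_filter_modEq_card a b hq c,
      max_eq_left (sub_nonneg.2 (Int.floor_le_floor hle))]
  have hfract (x : ℚ) : (q : ℚ) * ⌊x / q⌋ = x - q * Int.fract (x / q) := by
    rw [← Int.self_sub_fract]
    field_simp
  have hcount' : (q * apCount v u q a b - (b - a) : ℚ) =
      q * (Int.fract (((a : ℚ) - c) / q) - Int.fract (((b : ℚ) - c) / q)) := by
    have : (apCount v u q a b : ℚ) = ⌊((b : ℚ) - c) / q⌋ - ⌊((a : ℚ) - c) / q⌋ := by
      exact_mod_cast hcount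
    rw [this, mul_sub, hfract, hfract]
    ring
  have : |(q * apCount v u q a b - (b - a) : ℚ)| < q := by
    rw [hcount', abs_mul, Nat.abs_cast]
    refine mul_lt_of_lt_one_right hq' (abs_sub_lt_iff.2 ⟨?_, ?_⟩) <;>
      linarith [Int.fract_nonneg (((a : ℚ) - c) / q), Int.fract_lt_one (((a : ℚ) - c) / q),
        Int.fract_nonneg (((b : ℚ) - c) / q), Int.fract_lt_one (((b : ℚ) - c) / q)]
  exact_mod_cast this

lemma apProd_ne_zero (hne : ∀ i, 1 ≤ i → apTerm v u i ≠ 0) (a b : ℕ) : apProd v u a b ≠ 0 :=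
  Finset.prod_ne_zero_iff.2 fun i hi =>
    Int.natAbs_ne_zero.2 (hne i (Nat.one_le_of_lt (mem_Ioc.1 hi).1))

lemma apProd_dvd_apProd {a b b' : ℕ} (h : b ≤ b') : apProd v u a b ∣ apProd v u a b' :=
  Finset.prod_dvd_prod_of_subset _ _ _ (Ioc_subset_Ioc_right h)

lemma exists_dvd_apTerm_of_dvd_apProd {p a b : ℕ} (hp : p.Prime) (h : p ∣ apProd v u a b) :
    ∃ i ∈ Ioc a b, (p : ℤ) ∣ apTerm v u i := by
  obtain ⟨i, hi, hd⟩ := (hp.prime.dvd_finsetProd_iff _).1 h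
  exact ⟨i, hi, Int.natCast_dvd.2 hd⟩

lemma dvd_apProd_of_dvd_apTerm {p a b i : ℕ} (hi : i ∈ Ioc a b) (h : (p : ℤ) ∣ apTerm v u i) :
    p ∣ apProd v u a b :=
  (Int.natCast_dvd.1 h).trans (Finset.dvd_prod_of_mem (fun i => (apTerm v u i).natAbs) hi)

lemma not_dvd_apProd_of_lt (hne : ∀ i, 1 ≤ i → apTerm v u i ≠ 0) {p K : ℕ} (hp : p.Prime)
    (h : v * K + u.natAbs < p) : ¬ p ∣ apProd v u 0 K := by
  intro hd
  obtain ⟨i, hi, hdi⟩ := exists_dvd_apTerm_of_dvd_apProd hp hd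
  rw [mem_Ioc] at hi
  exact (h.trans_le (Nat.le_of_dvd (Int.natAbs_pos.2 (hne i hi.1)) (Int.natCast_dvd.1 hdi))).not_ge
    (natAbs_apTerm_le v u hi.2)

lemma factorization_apProd (hne : ∀ i, 1 ≤ i → apTerm v u i ≠ 0) {p : ℕ} (hp : p.Prime)
    {a b M : ℕ} (hM : ∀ i ∈ Ioc a b, (apTerm v u i).natAbs ≤ M) :
    (apProd v u a b).factorization p = ∑ r ∈ Ico 1 (Nat.log p M + 1), apCount v u (p ^ r) a b := by
  have hne' : ∀ i ∈ Ioc a b, (apTerm v u i).natAbs ≠ 0 := fun i hi =>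
    Int.natAbs_ne_zero.2 (hne i (Nat.one_le_of_lt (mem_Ioc.1 hi).1))
  have hterm : ∀ i ∈ Ioc a b, (apTerm v u i).natAbs.factorization p =
      ∑ r ∈ Ico 1 (Nat.log p M + 1), if ((p ^ r : ℕ) : ℤ) ∣ apTerm v u i then 1 else 0 := by
    intro i hi
    rw [Nat.factorization_eq_card_pow_dvd_of_lt hp (Nat.pos_of_ne_zero (hne' i hi))
      ((hM i hi).trans_lt (Nat.lt_pow_succ_log_self hp.one_lt M)), card_filter]
    simp_rw [Int.natCast_dvd]
  rw [apProd, Nat.factorization_prod_apply hne', Finset.sum_congr rfl hterm, Finset.sum_comm]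
  simp_rw [apCount, card_filter]

lemma not_dvd_apProd_of_dvd_left (huv : IsCoprime (v : ℤ) u) {p : ℕ} (hp : p.Prime) (hpv : p ∣ v)
    (a b : ℕ) : ¬ p ∣ apProd v u a b := by
  intro h
  obtain ⟨i, -, hi⟩ := exists_dvd_apTerm_of_dvd_apProd hp h
  have hpv' : (p : ℤ) ∣ v := by exact_mod_cast hpv
  have hu : (p : ℤ) ∣ u := (dvd_add_right (hpv'.mul_right _)).1 hi
  exact (Nat.prime_iff_prime_int.1 hp).not_isUnit (huv.isUnit_of_dvd' hpv' hu)

lemma apCount_le_apCount_add_one {q : ℕ} (hq : 0 < q) (hqv : q.Coprime v) {a b K : ℕ}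
    (hab : a ≤ b) (hK : b - a ≤ K) : apCount v u q a b ≤ apCount v u q 0 K + 1 := by
  have h1 := (abs_lt.1 (abs_mul_apCount_sub_lt u hq hqv hab)).2
  have h2 := (abs_lt.1 (abs_mul_apCount_sub_lt u hq hqv (Nat.zero_le K))).1
  have h3 : (q : ℤ) * apCount v u q a b < q * (apCount v u q 0 K + 2) := by
    rw [mul_add]
    push_cast at h2
    omega
  have := lt_of_mul_lt_mul_left h3 (by positivity)
  omega

lemma apCount_le_one {q : ℕ} (hq : 0 < q) (hqv : q.Coprime v) {a b : ℕ}
    (hab : a ≤ b) (hba : b - a ≤ q) : apCount v u q a b ≤ 1 := by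
  have h1 := (abs_lt.1 (abs_mul_apCount_sub_lt u hq hqv hab)).2
  have h3 : (q : ℤ) * apCount v u q a b < q * 2 := by omega
  have := lt_of_mul_lt_mul_left h3 (by positivity)
  omega

lemma factorization_apProd_le_add_log (huv : IsCoprime (v : ℤ) u)
    (hne : ∀ i, 1 ≤ i → apTerm v u i ≠ 0) {p : ℕ} (hp : p.Prime) {a b K M : ℕ} (hab : a ≤ b)
    (hK : b - a ≤ K) (hKb : K ≤ b) (hM : ∀ i, 1 ≤ i → i ≤ b → (apTerm v u i).natAbs ≤ M) :
    (apProd v u a b).factorization p ≤ (apProd v u 0 K).factorization p + Nat.log p M := by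
  by_cases hpv : p ∣ v
  · simp [Nat.factorization_eq_zero_of_not_dvd (not_dvd_apProd_of_dvd_left huv hp hpv a b)]
  have hM' {a' b' : ℕ} (hb : b' ≤ b) : ∀ i ∈ Ioc a' b', (apTerm v u i).natAbs ≤ M := fun i hi =>
    hM i (Nat.one_le_of_lt (mem_Ioc.1 hi).1) ((mem_Ioc.1 hi).2.trans hb)
  calc (apProd v u a b).factorization p
      = ∑ r ∈ Ico 1 (Nat.log p M + 1), apCount v u (p ^ r) a b :=
        factorization_apProd hne hp (hM' le_rfl)
    _ ≤ ∑ r ∈ Ico 1 (Nat.log p M + 1), (apCount v u (p ^ r) 0 K + 1) :=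
        Finset.sum_le_sum fun r _ => apCount_le_apCount_add_one (pow_pos hp.pos r)
          ((hp.coprime_iff_not_dvd.2 hpv).pow_left r) hab hK
    _ = (apProd v u 0 K).factorization p + Nat.log p M := by
        simp [Finset.sum_add_distrib, factorization_apProd hne hp (hM' hKb)]

lemma factorization_apProd_le_one (hne : ∀ i, 1 ≤ i → apTerm v u i ≠ 0) {p : ℕ} (hp : p.Prime)
    (hpv : ¬ p ∣ v) {a b M : ℕ} (hab : a ≤ b) (hba : b - a ≤ p) (hpM : M < p ^ 2)
    (hM : ∀ i ∈ Ioc a b, (apTerm v u i).natAbs ≤ M) :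
    (apProd v u a b).factorization p ≤ 1 := by
  have hlog : Nat.log p M < 2 := Nat.log_lt_of_lt_pow' two_ne_zero hpM
  calc (apProd v u a b).factorization p
      = ∑ r ∈ Ico 1 (Nat.log p M + 1), apCount v u (p ^ r) a b := factorization_apProd hne hp hM
    _ ≤ ∑ r ∈ Ico 1 2, apCount v u (p ^ r) a b :=
        Finset.sum_le_sum_of_subset (Ico_subset_Ico_right (by omega))
    _ = apCount v u p a b := by simp
    _ ≤ 1 := apCount_le_one hp.pos (hp.coprime_iff_not_dvd.2 hpv) hab hba

lemma factorization_apProd_le_of_lt_sq (huv : IsCoprime (v : ℤ) u)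
    (hne : ∀ i, 1 ≤ i → apTerm v u i ≠ 0) {p : ℕ} (hp : p.Prime) {a b K M : ℕ} (hab : a ≤ b)
    (hba : b - a ≤ p) (hpM : M < p ^ 2) (hM : ∀ i ∈ Ioc a b, (apTerm v u i).natAbs ≤ M)
    (hdvd : p ∣ apProd v u a b → p ∣ apProd v u 0 K) :
    (apProd v u a b).factorization p ≤ (apProd v u 0 K).factorization p := by
  by_cases h : p ∣ apProd v u a b
  · have hpv : ¬ p ∣ v := fun hpv => not_dvd_apProd_of_dvd_left huv hp hpv a b h
    exact (factorization_apProd_le_one hne hp hpv hab hba hpM hM).trans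
      ((hp.dvd_iff_one_le_factorization (apProd_ne_zero hne _ _)).1 (hdvd h))
  · simp [Nat.factorization_eq_zero_of_not_dvd h]

lemma succ_mul_apCount_le_of_not_dvd {p K j : ℕ} (hp : p.Prime) (hpv : ¬ p ∣ v) (hpK : K < p)
    (hKj : K ≤ j) (hdvd : ¬ p ∣ apProd v u 0 K) : (K + 1) * apCount v u p 0 j ≤ j := by
  have heq : apCount v u p 0 j = apCount v u p K j := by
    refine congrArg Finset.card (Finset.ext fun i => ?_)
    simp only [mem_filter, mem_Ioc]
    refine ⟨fun ⟨⟨h0, hij⟩, hd⟩ => ⟨⟨?_, hij⟩, hd⟩,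
      fun ⟨⟨hKi, hij⟩, hd⟩ => ⟨⟨Nat.zero_lt_of_lt hKi, hij⟩, hd⟩⟩
    by_contra! hle
    exact hdvd (dvd_apProd_of_dvd_apTerm (mem_Ioc.2 ⟨h0, hle⟩) hd)
  rcases eq_or_ne (apCount v u p K j) 0 with h | h
  · simp [heq, h]
  · obtain ⟨c, hc⟩ := Nat.exists_eq_succ_of_ne_zero h
    have hbound := (abs_lt.1 (abs_mul_apCount_sub_lt u hp.pos (hp.coprime_iff_not_dvd.2 hpv) hKj)).2
    rw [hc] at hbound
    rw [heq, hc]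
    zify
    push_cast at hbound
    have : ((K : ℤ) + 1) * c ≤ p * c := by gcongr; exact_mod_cast hpK
    linarith

lemma mul_apCount_le {q j : ℕ} (hq : 0 < q) (hqv : q.Coprime v) (hj : 1 ≤ j)
    (hqj : q ≤ v * j + u.natAbs) : q * apCount v u q 0 j ≤ (1 + v + u.natAbs) * j := by
  have hbound := (abs_lt.1 (abs_mul_apCount_sub_lt u hq hqv (Nat.zero_le j))).2
  have hu : u.natAbs ≤ u.natAbs * j := Nat.le_mul_of_pos_right _ hj
  rw [add_mul, add_mul]
  zify at *
  linarith

lemma sum_one_div_pow_le {p K : ℕ} (hK : 1 ≤ K) (hpK : K < p) (n : ℕ) :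
    ∑ r ∈ Ico 2 n, (1 / p : ℚ) ^ r ≤ 1 / (K * (K + 1)) := by
  have hK' : (1 : ℚ) ≤ K := by exact_mod_cast hK
  have hpK' : (K : ℚ) + 1 ≤ p := by exact_mod_cast hpK
  have hp' : (0 : ℚ) < p := by linarith
  have hp1 : (p : ℚ) - 1 ≠ 0 := by linarith
  calc ∑ r ∈ Ico 2 n, (1 / p : ℚ) ^ r
      ≤ (1 / p : ℚ) ^ 2 / (1 - 1 / p) :=
        geom_sum_Ico_le_of_lt_one (by positivity) (by rw [div_lt_one hp']; linarith)
    _ = 1 / ((p - 1) * p) := by field_simp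
    _ ≤ 1 / (K * (K + 1)) :=
        one_div_le_one_div_of_le (by positivity) (by gcongr <;> linarith)

lemma factorization_apProd_le_of_not_dvd (hne : ∀ i, 1 ≤ i → apTerm v u i ≠ 0) {p K j : ℕ}
    (hp : p.Prime) (hpv : ¬ p ∣ v) (hK : 1 ≤ K) (hpK : K < p) (hKj : K ≤ j)
    (hdvd : ¬ p ∣ apProd v u 0 K) :
    ((apProd v u 0 j).factorization p : ℚ) ≤
      j / (K + 1) + (1 + v + u.natAbs) * j * (1 / (K * (K + 1))) := by
  have hcop (r : ℕ) : (p ^ r).Coprime v := (hp.coprime_iff_not_dvd.2 hpv).pow_left r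
  have hj : 1 ≤ j := hK.trans hKj
  set M := v * j + u.natAbs
  have hone : (apCount v u p 0 j : ℚ) ≤ j / (K + 1) := by
    rw [le_div_iff₀ (by positivity), mul_comm]
    exact_mod_cast succ_mul_apCount_le_of_not_dvd hp hpv hpK hKj hdvd
  have hpow (r : ℕ) (hr : r ∈ Ico 2 (Nat.log p M + 1)) :
      (apCount v u (p ^ r) 0 j : ℚ) ≤ (1 + v + u.natAbs) * j * (1 / p) ^ r := by
    have hr' := mem_Ico.1 hr
    have hM : p ^ r ≤ M := Nat.pow_le_of_le_log
      (fun h => by rw [h, Nat.log_zero_right] at hr'; omega) (by omega)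
    have hp0 : (0 : ℚ) < p := by exact_mod_cast hp.pos
    rw [one_div, inv_pow, ← div_eq_mul_inv, le_div_iff₀ (by positivity), mul_comm]
    exact_mod_cast mul_apCount_le (pow_pos hp.pos r) (hcop r) hj hM
  have hsum : (apProd v u 0 j).factorization p ≤
      apCount v u p 0 j + ∑ r ∈ Ico 2 (Nat.log p M + 1), apCount v u (p ^ r) 0 j := by
    rw [factorization_apProd hne hp (M := M) fun i hi => natAbs_apTerm_le v u (mem_Ioc.1 hi).2]
    rcases Nat.eq_zero_or_pos (Nat.log p M) with h | h
    · simp [h]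
    · rw [Finset.sum_eq_sum_Ico_succ_bot (by omega), pow_one]
  calc ((apProd v u 0 j).factorization p : ℚ)
      ≤ apCount v u p 0 j + ∑ r ∈ Ico 2 (Nat.log p M + 1), (apCount v u (p ^ r) 0 j : ℚ) := by
        exact_mod_cast hsum
    _ ≤ j / (K + 1) + ∑ r ∈ Ico 2 (Nat.log p M + 1), (1 + v + u.natAbs) * j * (1 / p : ℚ) ^ r :=
        add_le_add hone (Finset.sum_le_sum hpow)
    _ ≤ _ := by
        rw [← Finset.mul_sum]
        gcongr
        exact sum_one_div_pow_le hK hpK _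

lemma mul_factorization_apProd_lt (hne : ∀ i, 1 ≤ i → apTerm v u i ≠ 0) {p k K : ℕ}
    (hp : p.Prime) (hpv : ¬ p ∣ v) (hK : K = k + (1 + v + u.natAbs)) (hpK : K < p)
    (hdvd : ¬ p ∣ apProd v u 0 K) {j : ℕ} (hj : 1 ≤ j) :
    k * (apProd v u 0 j).factorization p < j := by
  rcases le_total j K with hjK | hKj
  · rwa [Nat.factorization_eq_zero_of_not_dvd fun h => hdvd (h.trans (apProd_dvd_apProd hjK)),
      mul_zero]
  have hfac := factorization_apProd_le_of_not_dvd hne hp hpv (by omega) hpK hKj hdvd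
  have : (0 : ℚ) < j := by exact_mod_cast hj
  set C : ℚ := 1 + v + u.natAbs with hC
  have hC1 : 1 ≤ C := by rw [hC, add_assoc]; exact le_add_of_nonneg_right (by positivity)
  have hKC : (K : ℚ) = k + C := by rw [hK, hC]; push_cast; ring
  have hK0 : (0 : ℚ) < K := by rw [hKC]; positivity
  have hquad : (k : ℚ) * (K + C) < K * (K + 1) := by
    rw [hKC]
    nlinarith [(k.cast_nonneg : (0 : ℚ) ≤ k)]
  suffices (k : ℚ) * (apProd v u 0 j).factorization p < j by exact_mod_cast this
  calc (k : ℚ) * (apProd v u 0 j).factorization p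
      ≤ k * (j / (K + 1) + C * j * (1 / (K * (K + 1)))) := by gcongr
    _ = j * (k * (K + C) / (K * (K + 1))) := by field_simp
    _ < j * 1 := by
        gcongr
        exact (div_lt_one (by positivity)).2 hquad
    _ = j := mul_one _

end ArithmeticProgression

section StepProd

/-- The rising product `b * (b + r) * ⋯ * (b + (t - 1) * r)` with step `r`, out of which the
coefficients of the Padé approximants are built. -/
def stepProd {R : Type*} [CommSemiring R] (r b : R) (t : ℕ) : R := ∏ i ∈ range t, (b + r * i)

lemma pow_mul_prod_range {R : Type*} [CommMonoid R] (c : R) (f : ℕ → R) (n : ℕ) :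
    c ^ n * ∏ i ∈ range n, f i = ∏ i ∈ range n, c * f i := by
  rw [prod_mul_distrib, prod_const, card_range]

lemma stepProd_add {R : Type*} [CommSemiring R] (r b : R) (s t : ℕ) :
    stepProd r b (s + t) = stepProd r b s * stepProd r (b + r * s) t := by
  simp only [stepProd, prod_range_add]
  congr 1
  refine prod_congr rfl fun i _ => ?_
  push_cast
  ring

lemma stepProd_self {R : Type*} [CommSemiring R] (r : R) (t : ℕ) :
    stepProd r r t = r ^ t * t.factorial := by
  induction t with
  | zero => simp [stepProd]
  | succ t ih =>
    rw [stepProd, prod_range_succ, ← stepProd, ih, Nat.factorial_succ]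
    push_cast
    ring

lemma cast_stepProd {R : Type*} [CommSemiring R] (r b t : ℕ) :
    ((stepProd r b t : ℕ) : R) = stepProd (r : R) b t := by
  simp [stepProd]

lemma prod_range_erase_eq_stepProd {R : Type*} [CommRing R] (r a : R) (i t : ℕ) :
    ∏ j ∈ (range (i + t + 1)).erase i, (r * i + a - r * j) =
      (-1) ^ t * (stepProd r (r + a) i * stepProd r (r - a) t) := by
  have hsplit : (range (i + t + 1)).erase i = range i ∪ Ico (i + 1) (i + 1 + t) := by
    ext j
    simp only [mem_erase, mem_range, mem_union, mem_Ico]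
    omega
  have hdisj : Disjoint (range i) (Ico (i + 1) (i + 1 + t)) :=
    Finset.disjoint_left.2 fun j hj hj' => by
      simp only [mem_range, mem_Ico] at hj hj'
      omega
  have hlow : ∏ j ∈ range i, (r * i + a - r * j) = stepProd r (r + a) i := by
    rw [← prod_range_reflect]
    refine prod_congr rfl fun j hj => ?_
    rw [Nat.sub_sub, Nat.cast_sub (by rw [mem_range] at hj; omega)]
    push_cast
    ring
  have hhigh : ∏ j ∈ range t, (r * i + a - r * (i + 1 + j : ℕ)) =
      (-1) ^ t * stepProd r (r - a) t := by
    rw [stepProd, pow_mul_prod_range]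
    refine prod_congr rfl fun j _ => ?_
    push_cast
    ring
  rw [hsplit, prod_union hdisj, prod_Ico_eq_prod_range, Nat.add_sub_cancel_left, hlow, hhigh]
  ring

lemma stepProd_pos {R : Type*} [CommSemiring R] [PartialOrder R] [IsStrictOrderedRing R] {r b : R}
    (hr : 0 ≤ r) (hb : 0 < b) (t : ℕ) : 0 < stepProd r b t :=
  Finset.prod_pos fun _ _ => by positivity

lemma le_of_pow_dvd_factorial {p a t : ℕ} (hp : p.Prime) (h : p ^ a ∣ t.factorial) : a ≤ t := by
  have : Fact p.Prime := ⟨hp⟩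
  have ha := (padicValNat_dvd_iff_le t.factorial_ne_zero).1 h
  have hle : padicValNat p t.factorial ≤ (p - 1) * padicValNat p t.factorial :=
    Nat.le_mul_of_pos_left _ (Nat.sub_pos_of_lt hp.one_lt)
  rw [sub_one_mul_padicValNat_factorial] at hle
  omega

lemma factorial_dvd_stepProd_of_coprime {q t : ℕ} [NeZero q] (hq : q ∣ t.factorial) {r : ℕ}
    (hrq : r.Coprime q) (b : ℕ) : q ∣ stepProd r b t := by
  set c : ℕ := ((b : ZMod q) * (r : ZMod q)⁻¹).val with hc
  have hb : (b : ZMod q) = r * c := by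
    rw [hc, ZMod.natCast_val, ZMod.cast_id, mul_comm, mul_assoc, mul_comm _ (r : ZMod q),
      ZMod.coe_mul_inv_eq_one r hrq, mul_one]
  have heq : ((stepProd r b t : ℕ) : ZMod q) = ((r ^ t * c.ascFactorial t : ℕ) : ZMod q) := by
    rw [Nat.ascFactorial_eq_prod_range, cast_stepProd, hb, stepProd]
    push_cast
    rw [pow_mul_prod_range]
    exact prod_congr rfl fun i _ => (mul_add _ _ _).symm
  rw [← ZMod.natCast_eq_zero_iff, heq, ZMod.natCast_eq_zero_iff]
  exact (hq.trans (Nat.factorial_dvd_ascFactorial c t)).mul_left _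

lemma factorial_dvd_pow_mul_stepProd (r b t : ℕ) : t.factorial ∣ r ^ t * stepProd r b t := by
  refine (Nat.dvd_iff_prime_pow_dvd_dvd _ _).2 fun p a hp hpa => ?_
  by_cases hpr : p ∣ r
  · exact ((pow_dvd_pow_of_dvd hpr a).trans
      (pow_dvd_pow r (le_of_pow_dvd_factorial hp hpa))).mul_right _
  · have : NeZero (p ^ a) := ⟨(pow_pos hp.pos a).ne'⟩
    exact (factorial_dvd_stepProd_of_coprime hpa
      ((hp.coprime_iff_not_dvd.2 hpr).pow_left a).symm b).mul_left _

/-- The integer `r ^ (2 * t) * binom (b / r + t - 1) t`, a rational binomial coefficient with its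
denominator cleared. -/
def scaledChoose (r b t : ℕ) : ℕ := r ^ t * stepProd r b t / t.factorial

lemma factorial_mul_scaledChoose (r b t : ℕ) :
    t.factorial * scaledChoose r b t = r ^ t * stepProd r b t :=
  Nat.mul_div_cancel' (factorial_dvd_pow_mul_stepProd r b t)

lemma scaledChoose_le {r b c n : ℕ} (hr : r ≤ c) (hb : b ≤ c * (n + 1)) (t : ℕ) :
    scaledChoose r b t ≤ (r * c) ^ t * 2 ^ (n + t) := by
  have hprod : stepProd r b t ≤ c ^ t * (t.factorial * 2 ^ (n + t)) := by
    calc stepProd r b t ≤ ∏ i ∈ range t, c * (n + 1 + i) := by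
          refine Finset.prod_le_prod' fun i _ => ?_
          rw [mul_add]
          exact Nat.add_le_add hb (Nat.mul_le_mul_right _ hr)
      _ = c ^ t * (t.factorial * (n + t).choose t) := by
          rw [prod_mul_distrib, prod_const, card_range, ← Nat.ascFactorial_eq_prod_range,
            Nat.ascFactorial_eq_factorial_mul_choose]
      _ ≤ c ^ t * (t.factorial * 2 ^ (n + t)) := by
          gcongr
          exact Nat.choose_le_two_pow _ _
  refine Nat.le_of_mul_le_mul_left ?_ t.factorial_pos
  calc t.factorial * scaledChoose r b t = r ^ t * stepProd r b t := factorial_mul_scaledChoose r b t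
    _ ≤ r ^ t * (c ^ t * (t.factorial * 2 ^ (n + t))) := Nat.mul_le_mul_left _ hprod
    _ = t.factorial * ((r * c) ^ t * 2 ^ (n + t)) := by rw [mul_pow]; ring

end StepProd

section Pade

/-- The coefficients of the numerator of the diagonal Padé approximant of degree `m` to
`x ↦ x ^ (1 / r)` at `x = 1`, normalized to be natural numbers. -/
def padeCoeff (r m i : ℕ) : ℕ :=
  scaledChoose r (r - 1 + r * i) (m - i) * scaledChoose r (r + 1 + r * (m - i)) i

lemma padeCoeff_le (r : ℕ) {m i : ℕ} (hi : i ≤ m) :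
    padeCoeff r m i ≤ (4 * r * (r + 1)) ^ m := by
  obtain ⟨t, rfl⟩ := Nat.exists_eq_add_of_le hi
  have hleft : scaledChoose r (r - 1 + r * i) t ≤ (r * (r + 1)) ^ t * 2 ^ (i + t) :=
    scaledChoose_le r.le_succ (by have := Nat.sub_le r 1; nlinarith) t
  have hright : scaledChoose r (r + 1 + r * t) i ≤ (r * (r + 1)) ^ i * 2 ^ (t + i) :=
    scaledChoose_le r.le_succ (by nlinarith) i
  rw [padeCoeff, Nat.add_sub_cancel_left]
  calc _ ≤ (r * (r + 1)) ^ t * 2 ^ (i + t) * ((r * (r + 1)) ^ i * 2 ^ (t + i)) :=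
        Nat.mul_le_mul hleft hright
    _ = (r * (r + 1)) ^ (i + t) * (2 * 2) ^ (i + t) := by rw [mul_pow 2 2]; ring
    _ = (4 * r * (r + 1)) ^ (i + t) := by rw [← mul_pow]; ring

lemma stepProd_mul_padeCoeff (r i t : ℕ) :
    i.factorial * t.factorial * (stepProd r (r - 1) i * stepProd r (r + 1) t) *
        padeCoeff r (i + t) i =
      r ^ (i + t) * (stepProd r (r - 1) (i + t) * stepProd r (r + 1) (i + t)) := by
  have hleft := factorial_mul_scaledChoose r (r - 1 + r * i) t
  have hright := factorial_mul_scaledChoose r (r + 1 + r * t) i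
  have hS := stepProd_add r (r - 1) i t
  have hP := stepProd_add r (r + 1) t i
  rw [Nat.cast_id] at hS hP
  rw [padeCoeff, Nat.add_sub_cancel_left, hS, add_comm i t, hP]
  calc _ = stepProd r (r - 1) i * stepProd r (r + 1) t *
        (t.factorial * scaledChoose r (r - 1 + r * i) t) *
        (i.factorial * scaledChoose r (r + 1 + r * t) i) := by ring
    _ = _ := by rw [hleft, hright, pow_add]; ring

/-- The nodes `r * i` and `r * i + 1`. The coefficients of the Padé approximants are, up to a
common factor, the weights of the divided difference on the nodes with `i ≤ m`. -/
def padeNode (r : ℕ) : ℕ ⊕ ℕ → ℚ := Sum.elim (fun i => r * i) (fun i => r * i + 1)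

lemma padeNode_injective {r : ℕ} (hr : 2 ≤ r) : Function.Injective (padeNode r) := by
  have hr0 : r ≠ 0 := by omega
  have hne (a b : ℕ) : (r * a : ℚ) ≠ r * b + 1 := by
    intro h
    have h' : r * a = r * b + 1 := by exact_mod_cast h
    have : r ∣ 1 := (Nat.dvd_add_right (Dvd.intro b rfl)).1 (h' ▸ Dvd.intro a rfl)
    have := Nat.le_of_dvd one_pos this
    omega
  rintro (a | a) (b | b) hab
  · simpa [padeNode, hr0] using hab
  · exact absurd hab (hne a b)
  · exact absurd hab.symm (hne b a)
  · simpa [padeNode, hr0] using hab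

/-- The indices of the nodes used for the Padé approximants of degree `m`. -/
def padeIndices (m : ℕ) : Finset (ℕ ⊕ ℕ) := (range (m + 1)).disjSum (range (m + 1))

lemma prod_range_erase_padeNode (r i t : ℕ) :
    ∏ j ∈ (range (i + t + 1)).erase i, ((r : ℚ) * i - r * j) =
      (-1) ^ t * (r ^ (i + t) * (i.factorial * t.factorial)) := by
  have h := prod_range_erase_eq_stepProd (r : ℚ) 0 i t
  simp only [add_zero, sub_zero, stepProd_self] at h
  rw [h]
  ring

lemma prod_range_padeNode_sub_one (r i t : ℕ) :
    ∏ j ∈ range (i + t + 1), ((r : ℚ) * i - (r * j + 1)) =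
      -((-1) ^ t * (stepProd (r : ℚ) (r - 1) i * stepProd (r : ℚ) (r + 1) t)) := by
  have h := prod_range_erase_eq_stepProd (r : ℚ) (-1) i t
  rw [sub_neg_eq_add, ← sub_eq_add_neg, ← sub_eq_add_neg] at h
  rw [← h, ← mul_prod_erase _ _ (mem_range.2 (by omega : i < i + t + 1))]
  simp only [← sub_sub, sub_self, zero_sub, neg_one_mul, sub_right_comm _ (1 : ℚ)]

lemma prod_range_padeNode_add_one (r i t : ℕ) :
    ∏ j ∈ range (i + t + 1), ((r : ℚ) * i + 1 - r * j) =
      (-1) ^ t * (stepProd (r : ℚ) (r + 1) i * stepProd (r : ℚ) (r - 1) t) := by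
  rw [← prod_range_erase_eq_stepProd, ← mul_prod_erase _ _ (mem_range.2 (by omega : i < i + t + 1)),
    add_sub_cancel_left, one_mul]

lemma prod_padeNode_inl_sub (r i t : ℕ) :
    ∏ j ∈ (padeIndices (i + t)).erase (Sum.inl i), (padeNode r (Sum.inl i) - padeNode r j) =
      -(r ^ (i + t) * (i.factorial * t.factorial *
        (stepProd (r : ℚ) (r - 1) i * stepProd (r : ℚ) (r + 1) t))) := by
  have herase : (padeIndices (i + t)).erase (Sum.inl i) =
      ((range (i + t + 1)).erase i).disjSum (range (i + t + 1)) := by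
    ext (j | j) <;> simp [padeIndices]
  have hsign : ((-1 : ℚ) ^ t) * (-1) ^ t = 1 := by rw [← mul_pow]; simp
  rw [herase, prod_disjSum]
  simp only [padeNode, Sum.elim_inl, Sum.elim_inr, prod_range_erase_padeNode,
    prod_range_padeNode_sub_one]
  linear_combination -(r ^ (i + t) * (i.factorial * t.factorial *
    (stepProd (r : ℚ) (r - 1) i * stepProd (r : ℚ) (r + 1) t))) * hsign

lemma prod_padeNode_inr_sub (r i t : ℕ) :
    ∏ j ∈ (padeIndices (i + t)).erase (Sum.inr i), (padeNode r (Sum.inr i) - padeNode r j) =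
      r ^ (i + t) * (i.factorial * t.factorial *
        (stepProd (r : ℚ) (r - 1) t * stepProd (r : ℚ) (r + 1) i)) := by
  have herase : (padeIndices (i + t)).erase (Sum.inr i) =
      (range (i + t + 1)).disjSum ((range (i + t + 1)).erase i) := by
    ext (j | j) <;> simp [padeIndices]
  have hsign : ((-1 : ℚ) ^ t) * (-1) ^ t = 1 := by rw [← mul_pow]; simp
  rw [herase, prod_disjSum]
  simp only [padeNode, Sum.elim_inl, Sum.elim_inr, add_sub_add_right_eq_sub,
    prod_range_erase_padeNode, prod_range_padeNode_add_one]
  linear_combination (r ^ (i + t) * (i.factorial * t.factorial *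
    (stepProd (r : ℚ) (r - 1) t * stepProd (r : ℚ) (r + 1) i))) * hsign

lemma cast_stepProd_mul_padeCoeff {r : ℕ} (hr : 1 ≤ r) (i t : ℕ) :
    i.factorial * t.factorial * (stepProd (r : ℚ) (r - 1) i * stepProd (r : ℚ) (r + 1) t) *
        padeCoeff r (i + t) i =
      r ^ (i + t) * (stepProd (r : ℚ) (r - 1) (i + t) * stepProd (r : ℚ) (r + 1) (i + t)) := by
  have h := congrArg (Nat.cast (R := ℚ)) (stepProd_mul_padeCoeff r i t)
  push_cast [cast_stepProd, Nat.cast_sub hr] at h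
  exact h

lemma sum_padeCoeff_mul_eval {r : ℕ} (hr : 2 ≤ r) {m : ℕ} {f : ℚ[X]} (hf : f.natDegree ≤ 2 * m) :
    ∑ i ∈ range (m + 1), padeCoeff r m i * f.eval (r * i : ℚ) =
      ∑ i ∈ range (m + 1), padeCoeff r m (m - i) * f.eval (r * i + 1 : ℚ) := by
  have hcard : #(padeIndices m) = 2 * m + 2 := by
    rw [padeIndices, card_disjSum, card_range]
    ring
  have hlag := Lagrange.coeff_eq_sum (s := padeIndices m) (P := f) (padeNode_injective hr).injOn
    (degree_le_natDegree.trans_lt (by rw [hcard]; exact_mod_cast (by omega)))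
  rw [hcard, coeff_eq_zero_of_natDegree_lt (by omega), padeIndices, sum_disjSum,
    ← padeIndices] at hlag
  set K : ℚ := r ^ (2 * m) * (stepProd (r : ℚ) (r - 1) m * stepProd (r : ℚ) (r + 1) m) with hK
  have hr1 : (1 : ℚ) < r := by exact_mod_cast hr
  have hS := stepProd_pos (r := (r : ℚ)) (b := r - 1) (by positivity) (by linarith)
  have hP := stepProd_pos (r := (r : ℚ)) (b := r + 1) (by positivity) (by positivity)
  have hleft : ∀ i ∈ range (m + 1), padeCoeff r m i * f.eval (r * i : ℚ) =
      -(K * (f.eval (padeNode r (Sum.inl i)) / ∏ j ∈ (padeIndices m).erase (Sum.inl i),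
        (padeNode r (Sum.inl i) - padeNode r j))) := by
    intro i hi
    obtain ⟨t, rfl⟩ := Nat.exists_eq_add_of_le (Nat.lt_succ_iff.1 (mem_range.1 hi))
    have := hS i
    have := hP t
    rw [prod_padeNode_inl_sub, mul_div_assoc', ← div_neg, neg_neg, eq_div_iff (by positivity), hK,
      padeNode, Sum.elim_inl]
    linear_combination (r ^ (i + t) * f.eval (r * i : ℚ)) *
      cast_stepProd_mul_padeCoeff (r := r) (by omega) i t
  have hright : ∀ i ∈ range (m + 1), padeCoeff r m (m - i) * f.eval (r * i + 1 : ℚ) =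
      K * (f.eval (padeNode r (Sum.inr i)) / ∏ j ∈ (padeIndices m).erase (Sum.inr i),
        (padeNode r (Sum.inr i) - padeNode r j)) := by
    intro i hi
    obtain ⟨t, rfl⟩ := Nat.exists_eq_add_of_le (Nat.lt_succ_iff.1 (mem_range.1 hi))
    have := hS t
    have := hP i
    have h := cast_stepProd_mul_padeCoeff (r := r) (by omega) t i
    rw [prod_padeNode_inr_sub, mul_div_assoc', eq_div_iff (by positivity), hK,
      padeNode, Sum.elim_inr, Nat.add_sub_cancel_left]
    rw [add_comm t i] at h
    linear_combination (r ^ (i + t) * f.eval (r * i + 1 : ℚ)) * h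
  rw [sum_congr rfl hleft, sum_congr rfl hright, sum_neg_distrib, ← mul_sum, ← mul_sum]
  linear_combination K * hlag

lemma sum_padeCoeff_mul_choose {r : ℕ} (hr : 2 ≤ r) {m d : ℕ} (hd : d ≤ 2 * m) :
    ∑ i ∈ range (m + 1), padeCoeff r m i * (r * i).choose d =
      ∑ i ∈ range (m + 1), padeCoeff r m (m - i) * (r * i + 1).choose d := by
  have h := sum_padeCoeff_mul_eval hr (f := descPochhammer ℚ d)
    ((descPochhammer_natDegree ℚ d).trans_le hd)
  have heval (n : ℕ) : (descPochhammer ℚ d).eval (n : ℚ) = d.factorial * (n.choose d : ℚ) := by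
    rw [descPochhammer_eval_eq_descFactorial, Nat.descFactorial_eq_factorial_mul_choose,
      Nat.cast_mul]
  simp only [← Nat.cast_mul, ← Nat.cast_add_one, heval] at h
  norm_cast at h
  simp only [mul_left_comm _ d.factorial, ← mul_sum] at h
  exact Nat.eq_of_mul_eq_mul_left d.factorial_pos h

end Pade

section PadeApproximant

/-- The numerator of the diagonal Padé approximant of degree `m` to `x ↦ x ^ (1 / r)` at `x = 1`,
normalized to have natural coefficients. -/
def padeNum (r m : ℕ) : ℕ[X] := ∑ i ∈ range (m + 1), C (padeCoeff r m i) * X ^ i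

/-- The denominator of the diagonal Padé approximant of degree `m` to `x ↦ x ^ (1 / r)` at `x = 1`,
normalized to have natural coefficients. -/
def padeDen (r m : ℕ) : ℕ[X] := ∑ i ∈ range (m + 1), C (padeCoeff r m (m - i)) * X ^ i

lemma natDegree_padeNum_le (r m : ℕ) : (padeNum r m).natDegree ≤ m :=
  natDegree_sum_le_of_forall_le _ _ fun i hi =>
    (natDegree_C_mul_X_pow_le _ _).trans (by rw [mem_range] at hi; omega)

lemma natDegree_padeDen_le (r m : ℕ) : (padeDen r m).natDegree ≤ m :=
  natDegree_sum_le_of_forall_le _ _ fun i hi =>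
    (natDegree_C_mul_X_pow_le _ _).trans (by rw [mem_range] at hi; omega)

lemma eval_sum_C_mul_X_pow_le {c : ℕ → ℕ} {m A y : ℕ} (hc : ∀ i ≤ m, c i ≤ A) (hy : 1 ≤ y) :
    (∑ i ∈ range (m + 1), C (c i) * X ^ i).eval y ≤ (m + 1) * (A * y ^ m) := by
  rw [eval_finsetSum]
  refine (sum_le_card_nsmul _ _ (A * y ^ m) fun i hi => ?_).trans_eq (by simp)
  have him : i ≤ m := Nat.lt_succ_iff.1 (mem_range.1 hi)
  rw [eval_C_mul, eval_pow, eval_X]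
  exact Nat.mul_le_mul (hc i him) (Nat.pow_le_pow_right hy him)

lemma eval_padeNum_le (r m : ℕ) {y : ℕ} (hy : 1 ≤ y) :
    (padeNum r m).eval y ≤ (m + 1) * (4 * r * (r + 1) * y) ^ m := by
  rw [mul_pow]
  exact eval_sum_C_mul_X_pow_le (fun _ => padeCoeff_le r) hy

lemma eval_padeDen_le (r m : ℕ) {y : ℕ} (hy : 1 ≤ y) :
    (padeDen r m).eval y ≤ (m + 1) * (4 * r * (r + 1) * y) ^ m := by
  rw [mul_pow]
  exact eval_sum_C_mul_X_pow_le (fun i _ => padeCoeff_le r (m.sub_le i)) hy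

lemma comp_expand_padeNum (r m : ℕ) : (expand ℕ r (padeNum r m)).comp (X + 1) =
    ∑ i ∈ range (m + 1), C (padeCoeff r m i) * (X + 1) ^ (r * i) := by
  simp only [padeNum, map_sum, map_mul, map_pow, expand_C, expand_X, ← pow_mul,
    Polynomial.sum_comp, mul_comp, C_comp, X_pow_comp]

lemma comp_X_mul_expand_padeDen (r m : ℕ) : (X * expand ℕ r (padeDen r m)).comp (X + 1) =
    ∑ i ∈ range (m + 1), C (padeCoeff r m (m - i)) * (X + 1) ^ (r * i + 1) := by
  simp only [padeDen, map_sum, map_mul, map_pow, expand_C, expand_X, ← pow_mul, mul_sum,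
    Polynomial.sum_comp, mul_comp, C_comp, X_comp, X_pow_comp, mul_left_comm _ (C _), pow_succ']

lemma coeff_comp_expand_padeNum {r : ℕ} (hr : 2 ≤ r) {m d : ℕ} (hd : d ≤ 2 * m) :
    ((expand ℕ r (padeNum r m)).comp (X + 1)).coeff d =
      ((X * expand ℕ r (padeDen r m)).comp (X + 1)).coeff d := by
  simp only [comp_expand_padeNum, comp_X_mul_expand_padeDen, finsetSum_coeff, coeff_C_mul,
    coeff_X_add_one_pow]
  exact_mod_cast sum_padeCoeff_mul_choose hr hd

lemma abs_aeval_sub_aeval_le {f g : ℕ[X]} {n : ℕ} (h : ∀ d < n, f.coeff d = g.coeff d) {x : ℝ}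
    (hx : |x| ≤ 1) : |aeval x f - aeval x g| ≤ |x| ^ n * (f.eval 1 + g.eval 1 : ℕ) := by
  set N := max f.natDegree g.natDegree + 1
  have hf : f.natDegree < N := by omega
  have hg : g.natDegree < N := by omega
  rw [aeval_eq_sum_range' hf, aeval_eq_sum_range' hg, eval_eq_sum_range' hf,
    eval_eq_sum_range' hg, ← sum_sub_distrib, ← sum_add_distrib]
  push_cast
  rw [mul_sum]
  refine (abs_sum_le_sum_abs _ _).trans (sum_le_sum fun d _ => ?_)
  rw [nsmul_eq_mul, nsmul_eq_mul, ← sub_mul, abs_mul, abs_pow, one_pow, mul_one, mul_one, mul_comm]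
  rcases lt_or_ge d n with hd | hd
  · rw [h d hd, sub_self, abs_zero, mul_zero]
    positivity
  · refine mul_le_mul (pow_le_pow_of_le_one (abs_nonneg x) hx hd) ?_ (abs_nonneg _) (by positivity)
    exact (abs_sub _ _).trans_eq (by rw [Nat.abs_cast, Nat.abs_cast])

/-- The base of the exponential bounds, in the degree, for the Padé approximants and for their
remainders. -/
def padeBound (r : ℕ) : ℕ := 8 * r * (r + 1) * 2 ^ r

lemma two_le_padeBound {r : ℕ} (hr : 1 ≤ r) : 2 ≤ padeBound r := by
  have : 0 < r * (r + 1) * 2 ^ r := by positivity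
  rw [padeBound, mul_assoc 8, mul_assoc 8]
  omega

lemma succ_mul_pow_le_padeBound_pow {r : ℕ} (hr : 1 ≤ r) (m : ℕ) :
    3 * ((m + 1) * (4 * r * (r + 1) * 2 ^ r) ^ m) ≤ padeBound r ^ (m + 1) := by
  have hm : m + 1 ≤ 2 ^ (m + 1) := Nat.lt_two_pow_self.le
  have hK : 3 ≤ 4 * r * (r + 1) * 2 ^ r := by
    have := Nat.one_le_two_pow (n := r)
    nlinarith [Nat.mul_le_mul hr this]
  calc 3 * ((m + 1) * (4 * r * (r + 1) * 2 ^ r) ^ m)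
      ≤ 4 * r * (r + 1) * 2 ^ r * (2 ^ (m + 1) * (4 * r * (r + 1) * 2 ^ r) ^ m) := by gcongr
    _ = (2 * (4 * r * (r + 1) * 2 ^ r)) ^ (m + 1) := by rw [mul_pow 2]; ring
    _ = padeBound r ^ (m + 1) := by rw [padeBound]; ring

lemma abs_aeval_padeNum_pow_sub_le {r : ℕ} (hr : 2 ≤ r) (m : ℕ) {w : ℝ} (hw : |w - 1| ≤ 1) :
    |aeval (w ^ r) (padeNum r m) - w * aeval (w ^ r) (padeDen r m)| ≤
      |w - 1| ^ (2 * m + 1) * padeBound r ^ (m + 1) := by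
  have h := abs_aeval_sub_aeval_le (n := 2 * m + 1)
    (fun d hd => coeff_comp_expand_padeNum hr (Nat.lt_succ_iff.1 hd)) hw
  simp only [aeval_comp, map_add, map_one, map_mul, aeval_X, sub_add_cancel, expand_aeval,
    eval_comp, eval_add, eval_X, eval_one, eval_mul, expand_eval] at h
  refine h.trans (mul_le_mul_of_nonneg_left ?_ (by positivity))
  have hnum := eval_padeNum_le r m (Nat.one_le_two_pow (n := r))
  have hden := eval_padeDen_le r m (Nat.one_le_two_pow (n := r))
  have hbound := succ_mul_pow_le_padeBound_pow (r := r) (by omega) m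
  rw [one_add_one_eq_two]
  exact_mod_cast (by omega)

lemma abs_aeval_padeDen_le {r : ℕ} (hr : 1 ≤ r) (m : ℕ) {x : ℝ} (hx : |x| ≤ 2) :
    |aeval x (padeDen r m)| ≤ padeBound r ^ (m + 1) := by
  have h2 : 2 ≤ 2 ^ r := Nat.le_self_pow (by omega) 2
  calc |aeval x (padeDen r m)| ≤ ((padeDen r m).eval (2 ^ r) : ℕ) := by
        rw [aeval_eq_sum_range, eval_eq_sum_range]
        push_cast
        refine (abs_sum_le_sum_abs _ _).trans (sum_le_sum fun i _ => ?_)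
        rw [nsmul_eq_mul, abs_mul, abs_pow, Nat.abs_cast]
        gcongr
        exact hx.trans (by exact_mod_cast h2)
    _ ≤ padeBound r ^ (m + 1) := by
        have hden := eval_padeDen_le r m (Nat.one_le_two_pow (n := r))
        have hbound := succ_mul_pow_le_padeBound_pow hr m
        exact_mod_cast (by omega)

lemma exists_eq_pow_mul_aeval_div {f : ℕ[X]} {m : ℕ} (hf : f.natDegree ≤ m) (p : ℕ) {q : ℕ}
    (hq : q ≠ 0) : ∃ z : ℕ, (z : ℝ) = q ^ m * aeval (p / q : ℝ) f := by
  obtain ⟨z, b, hb, hz⟩ := denomsClearable_of_natDegree_le (i := algebraMap ℕ ℝ) (b := q) m p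
    (inv_mul_cancel₀ (by simpa)) f hf
  refine ⟨z, ?_⟩
  rw [eq_inv_of_mul_eq_one_left hb] at hz
  simpa [aeval_def, eval_map, div_eq_mul_inv] using hz

end PadeApproximant

section ConsecutivePade

lemma succ_mul_scaledChoose_succ (r b t : ℕ) :
    (t + 1) * scaledChoose r b (t + 1) = r * (b + r * t) * scaledChoose r b t := by
  have h := factorial_mul_scaledChoose r b (t + 1)
  have hprod : stepProd r b (t + 1) = stepProd r b t * (b + r * t) := by
    rw [stepProd, prod_range_succ, stepProd, Nat.cast_id]
  rw [hprod, pow_succ, Nat.factorial_succ] at h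
  refine Nat.eq_of_mul_eq_mul_left t.factorial_pos ?_
  linear_combination h - r * (b + r * t) * factorial_mul_scaledChoose r b t

lemma scaledChoose_zero (r b : ℕ) : scaledChoose r b 0 = 1 := by
  simp [scaledChoose, stepProd]

lemma scaledChoose_pos {r b : ℕ} (hr : 1 ≤ r) (hb : 1 ≤ b) (t : ℕ) : 0 < scaledChoose r b t := by
  refine Nat.pos_of_mul_pos_left (a := t.factorial) ?_
  rw [factorial_mul_scaledChoose]
  exact Nat.mul_pos (pow_pos hr t) (stepProd_pos r.zero_le hb t)

lemma coeff_zero_padeNum (r m : ℕ) : (padeNum r m).coeff 0 = scaledChoose r (r - 1) m := by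
  rw [padeNum, finsetSum_coeff, sum_eq_single 0 (fun i _ hi => by simp [coeff_X_pow, hi.symm])
    (by simp)]
  simp [padeCoeff, scaledChoose_zero]

lemma coeff_zero_padeDen (r m : ℕ) : (padeDen r m).coeff 0 = scaledChoose r (r + 1) m := by
  rw [padeDen, finsetSum_coeff, sum_eq_single 0 (fun i _ hi => by simp [coeff_X_pow, hi.symm])
    (by simp)]
  simp [padeCoeff, scaledChoose_zero]

lemma coeff_zero_padeNum_mul_padeDen_lt {r : ℕ} (hr : 2 ≤ r) (m : ℕ) :
    (padeNum r (m + 1)).coeff 0 * (padeDen r m).coeff 0 <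
      (padeNum r m).coeff 0 * (padeDen r (m + 1)).coeff 0 := by
  simp only [coeff_zero_padeNum, coeff_zero_padeDen]
  refine Nat.lt_of_mul_lt_mul_left (a := m + 1) ?_
  have hS := scaledChoose_pos (r := r) (b := r - 1) (by omega) (by omega) m
  have hP := scaledChoose_pos (r := r) (b := r + 1) (by omega) (by omega) m
  calc (m + 1) * (scaledChoose r (r - 1) (m + 1) * scaledChoose r (r + 1) m)
      = r * (r - 1 + r * m) * (scaledChoose r (r - 1) m * scaledChoose r (r + 1) m) := by
        rw [← mul_assoc, succ_mul_scaledChoose_succ]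
        ring
    _ < r * (r + 1 + r * m) * (scaledChoose r (r - 1) m * scaledChoose r (r + 1) m) := by
        gcongr
        omega
    _ = (m + 1) * (scaledChoose r (r - 1) m * scaledChoose r (r + 1) (m + 1)) := by
        rw [mul_left_comm (m + 1), succ_mul_scaledChoose_succ]
        ring

lemma X_sub_one_pow_dvd_of_dvd_expand {K : Type*} [Field K] [CharZero K] {r : ℕ} (hr : r ≠ 0)
    {n : ℕ} {f : K[X]} (h : (X - C 1) ^ n ∣ expand K r f) : (X - C 1) ^ n ∣ f := by
  induction n generalizing f with
  | zero => simp
  | succ n ih =>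
    have hroot : f.IsRoot 1 := by
      have := (dvd_pow_self _ n.succ_ne_zero).trans h
      rwa [dvd_iff_isRoot, IsRoot, expand_eval, one_pow] at this
    obtain ⟨g, rfl⟩ := dvd_iff_isRoot.2 hroot
    have hgeom : expand K r (X - C 1) = (∑ i ∈ range r, X ^ i) * (X - C 1) := by
      rw [map_sub, expand_X, expand_C, C_1, geom_sum_mul]
    have hcop : IsCoprime ((X - C 1 : K[X]) ^ n) (∑ i ∈ range r, X ^ i) := by
      refine ((irreducible_X_sub_C 1).coprime_iff_not_dvd.2 fun hdvd => ?_).pow_left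
      rw [dvd_iff_isRoot, IsRoot, eval_geom_sum] at hdvd
      simp [hr] at hdvd
    rw [map_mul, hgeom, mul_comm _ (X - C 1), mul_assoc, pow_succ',
      mul_dvd_mul_iff_left (X_sub_C_ne_zero 1)] at h
    rw [pow_succ']
    exact mul_dvd_mul_left _ (ih (hcop.dvd_of_dvd_mul_left h))

lemma X_sub_one_pow_dvd_padeRem {r : ℕ} (hr : 2 ≤ r) (m : ℕ) :
    (X - C 1 : ℝ[X]) ^ (2 * m + 1) ∣ (expand ℕ r (padeNum r m)).map (Nat.castRingHom ℝ) -
      (X * expand ℕ r (padeDen r m)).map (Nat.castRingHom ℝ) := by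
  rw [X_sub_C_pow_dvd_iff, X_pow_dvd_iff]
  intro d hd
  have h := coeff_comp_expand_padeNum hr (Nat.lt_succ_iff.1 hd)
  have hmap (f : ℕ[X]) : (f.map (Nat.castRingHom ℝ)).comp (X + C 1) =
      (f.comp (X + 1)).map (Nat.castRingHom ℝ) := by
    rw [map_comp, Polynomial.map_add, map_X, Polynomial.map_one, C_1]
  rw [sub_comp, coeff_sub, hmap, hmap, coeff_map, coeff_map, h, sub_self]

lemma X_sub_one_pow_dvd_padeNum_mul_padeDen_sub {r : ℕ} (hr : 2 ≤ r) (m : ℕ) :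
    (X - C 1 : ℝ[X]) ^ (2 * m + 1) ∣
      (padeNum r m * padeDen r (m + 1)).map (Nat.castRingHom ℝ) -
        (padeNum r (m + 1) * padeDen r m).map (Nat.castRingHom ℝ) := by
  refine X_sub_one_pow_dvd_of_dvd_expand (r := r) (by omega) ?_
  have hm := (X_sub_one_pow_dvd_padeRem hr m).mul_right
    ((expand ℕ r (padeDen r (m + 1))).map (Nat.castRingHom ℝ))
  have hm' := ((pow_dvd_pow _ (show 2 * m + 1 ≤ 2 * (m + 1) + 1 by omega)).trans
    (X_sub_one_pow_dvd_padeRem hr (m + 1))).mul_right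
    ((expand ℕ r (padeDen r m)).map (Nat.castRingHom ℝ))
  convert dvd_sub hm hm' using 1
  simp only [map_sub, Polynomial.map_mul, map_mul, map_expand, map_X]
  ring

lemma aeval_padeNum_mul_padeDen_ne {r : ℕ} (hr : 2 ≤ r) (m : ℕ) {x : ℝ} (hx : x ≠ 1) :
    aeval x (padeNum r m) * aeval x (padeDen r (m + 1)) ≠
      aeval x (padeNum r (m + 1)) * aeval x (padeDen r m) := by
  obtain ⟨E, hE⟩ := X_sub_one_pow_dvd_padeNum_mul_padeDen_sub hr m
  set D := (padeNum r m * padeDen r (m + 1)).map (Nat.castRingHom ℝ) -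
    (padeNum r (m + 1) * padeDen r m).map (Nat.castRingHom ℝ) with hD
  have hD0 : D ≠ 0 := by
    intro h
    have hlt := (coeff_zero_padeNum_mul_padeDen_lt hr m).ne'
    have := congrArg (coeff · 0) h
    rw [hD, coeff_sub, coeff_map, coeff_map, mul_coeff_zero, mul_coeff_zero, coeff_zero,
      sub_eq_zero] at this
    exact hlt (Nat.cast_injective this)
  have hdeg : D.natDegree ≤ 2 * m + 1 := by
    have hnum := natDegree_padeNum_le r
    have hden := natDegree_padeDen_le r
    refine (natDegree_sub_le _ _).trans (max_le ?_ ?_) <;>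
      refine (natDegree_map_le.trans natDegree_mul_le).trans ?_
    · linarith [hnum m, hden (m + 1)]
    · linarith [hnum (m + 1), hden m]
  have hE0 : E ≠ 0 := by
    rintro rfl
    exact hD0 (by rw [hE, mul_zero])
  obtain ⟨e, rfl⟩ : ∃ e, E = C e := ⟨_, eq_C_of_natDegree_eq_zero (by
    rw [hE, natDegree_mul (pow_ne_zero _ (X_sub_C_ne_zero 1)) hE0, natDegree_pow,
      natDegree_X_sub_C] at hdeg
    omega)⟩
  have heval : D.eval x ≠ 0 := by
    rw [hE, eval_mul, eval_pow, eval_sub, eval_X, eval_C, eval_C]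
    exact mul_ne_zero (pow_ne_zero _ (sub_ne_zero.2 hx)) (by simpa using hE0)
  rw [hD, eval_sub, sub_ne_zero, eval_map, eval_map] at heval
  rwa [← map_mul, ← map_mul, aeval_def, aeval_def]

end ConsecutivePade

section IrrationalityMeasure

lemma pow_mul_abs_sub_le {w z : ℝ} (hw : 0 ≤ w) (hz : 0 ≤ z) {r : ℕ} (hr : 1 ≤ r) :
    w ^ (r - 1) * |w - z| ≤ |w ^ r - z ^ r| := by
  have hterm := single_le_sum (f := fun i => w ^ i * z ^ (r - 1 - i))
    (fun i _ => by positivity) (mem_range.2 (by omega : r - 1 < r))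
  rw [Nat.sub_self, pow_zero, mul_one] at hterm
  rw [← geom_sum₂_mul, abs_mul]
  gcongr
  exact hterm.trans (le_abs_self _)

lemma abs_aeval_padeNum_sub_le {r : ℕ} (hr : 2 ≤ r) (m : ℕ) {x z : ℝ} (hx : |x - 1| ≤ 1 / 2)
    (hz : 0 ≤ z) :
    |aeval x (padeNum r m) - z * aeval x (padeDen r m)| ≤
      (|x - 1| ^ (2 * m + 1) + 2 * |x - z ^ r|) * padeBound r ^ (m + 1) := by
  have hr1 : 1 ≤ r := by omega
  have hx' := abs_le.1 hx
  obtain ⟨w, hw, rfl⟩ : ∃ w : ℝ, 0 ≤ w ∧ w ^ r = x :=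
    ⟨x ^ (r : ℝ)⁻¹, Real.rpow_nonneg (by linarith) _,
      Real.rpow_inv_natCast_pow (by linarith) (by omega)⟩
  have hw1 : |w - 1| ≤ |w ^ r - 1| := by
    simpa [abs_sub_comm] using pow_mul_abs_sub_le zero_le_one hw hr1
  have hhalf : 1 / 2 ≤ w ^ (r - 1) := by
    rcases le_total w 1 with h | h
    · linarith [pow_le_pow_of_le_one hw h (Nat.sub_le r 1)]
    · linarith [one_le_pow₀ h (n := r - 1)]
  have hwz : |w - z| ≤ 2 * |w ^ r - z ^ r| := by
    have := pow_mul_abs_sub_le hw hz hr1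
    nlinarith [abs_nonneg (w - z)]
  have hrem := abs_aeval_padeNum_pow_sub_le hr m (hw1.trans (hx.trans (by norm_num)))
  have hden := abs_aeval_padeDen_le hr1 m (abs_le.2 ⟨by linarith, by linarith⟩ : |w ^ r| ≤ 2)
  calc |aeval (w ^ r) (padeNum r m) - z * aeval (w ^ r) (padeDen r m)|
      = |(aeval (w ^ r) (padeNum r m) - w * aeval (w ^ r) (padeDen r m)) +
          (w - z) * aeval (w ^ r) (padeDen r m)| := by ring_nf
    _ ≤ |w - 1| ^ (2 * m + 1) * padeBound r ^ (m + 1) +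
          |w - z| * |aeval (w ^ r) (padeDen r m)| := by
        rw [← abs_mul]
        exact (abs_add_le _ _).trans (add_le_add_left hrem _)
    _ ≤ |w ^ r - 1| ^ (2 * m + 1) * padeBound r ^ (m + 1) +
          2 * |w ^ r - z ^ r| * padeBound r ^ (m + 1) := by gcongr
    _ = _ := by ring

lemma one_le_pow_mul_abs_aeval_padeNum_sub {r m p q c d : ℕ} (hq : q ≠ 0) (hd : d ≠ 0)
    (hne : aeval (p / q : ℝ) (padeNum r m) ≠ c / d * aeval (p / q : ℝ) (padeDen r m)) :
    1 ≤ q ^ m * d *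
      |aeval (p / q : ℝ) (padeNum r m) - c / d * aeval (p / q : ℝ) (padeDen r m)| := by
  obtain ⟨A, hA⟩ := exists_eq_pow_mul_aeval_div (natDegree_padeNum_le r m) p hq
  obtain ⟨B, hB⟩ := exists_eq_pow_mul_aeval_div (natDegree_padeDen_le r m) p hq
  have hint : (q ^ m * d *
      (aeval (p / q : ℝ) (padeNum r m) - c / d * aeval (p / q : ℝ) (padeDen r m)) : ℝ) =
      ((d * A - c * B : ℤ) : ℝ) := by
    push_cast
    rw [hA, hB]
    field_simp
  rw [← abs_of_nonneg (by positivity : (0 : ℝ) ≤ q ^ m * d), ← abs_mul, hint, ← Int.cast_abs]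
  have hne' : (d * A - c * B : ℤ) ≠ 0 := by
    rw [← Int.cast_ne_zero (α := ℝ), ← hint]
    exact mul_ne_zero (by positivity) (sub_ne_zero.2 hne)
  exact_mod_cast Int.one_le_abs hne'

lemma pow_mul_pow_lt_half {C U q d : ℝ} {n : ℕ} (hC : 0 < C) (hU : 0 < U) (hd : 0 < d)
    (hq : (C * U ^ 2) ^ 2 ≤ q) (hUq : U ≤ q) (hn : 4 * d ^ 2 * C ^ 2 < q ^ n) :
    q ^ n * d * ((U / q) ^ (2 * n + 1) * C ^ (n + 1)) < 1 / 2 := by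
  have hq0 : 0 < q := lt_of_lt_of_le (by positivity) hq
  have hsq : ((C * U ^ 2 / q) ^ n) ^ 2 ≤ (1 / q) ^ n := by
    rw [pow_right_comm]
    gcongr
    rw [div_pow, div_le_div_iff₀ (by positivity) hq0]
    nlinarith
  have hhalf : d * C * (C * U ^ 2 / q) ^ n < 1 / 2 := by
    refine lt_of_pow_lt_pow_left₀ 2 (by norm_num) ?_
    calc (d * C * (C * U ^ 2 / q) ^ n) ^ 2 = (d * C) ^ 2 * ((C * U ^ 2 / q) ^ n) ^ 2 := by ring
      _ ≤ (d * C) ^ 2 * (1 / q) ^ n := by gcongr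
      _ = (d * C) ^ 2 / q ^ n := by rw [one_div, inv_pow, div_eq_mul_inv]
      _ < (1 / 2) ^ 2 := by
        rw [div_lt_iff₀ (by positivity)]
        linarith
  calc q ^ n * d * ((U / q) ^ (2 * n + 1) * C ^ (n + 1))
      = d * C * (q * (U / q) ^ 2 * C) ^ n * (U / q) := by ring
    _ = d * C * (C * U ^ 2 / q) ^ n * (U / q) := by
        congr 3
        field_simp
    _ ≤ d * C * (C * U ^ 2 / q) ^ n :=
        mul_le_of_le_one_right (by positivity) ((div_le_one hq0).2 hUq)
    _ < 1 / 2 := hhalf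

lemma one_le_mul_abs_sub_of_aeval_ne {r p q c d n : ℕ} {U : ℝ} (hr : 2 ≤ r) (hU1 : 1 ≤ U)
    (hU : |(p : ℝ) - q| ≤ U) (hq : (padeBound r * U ^ 2) ^ 2 ≤ q) (hd : d ≠ 0)
    (hlow : 4 * d ^ 2 * padeBound r ^ 2 < q ^ n)
    (hupp : q ^ n ≤ q ^ 2 * (5 * d ^ 2 * padeBound r ^ 2))
    (hne : aeval (p / q : ℝ) (padeNum r n) ≠ c / d * aeval (p / q : ℝ) (padeDen r n)) :
    1 ≤ 100 * padeBound r ^ 5 * q ^ 4 * d ^ 5 * |(p / q : ℝ) - (c / d) ^ r| := by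
  set C := padeBound r
  set e := |(p / q : ℝ) - (c / d) ^ r|
  have hC : (2 : ℝ) ≤ C := by exact_mod_cast two_le_padeBound (by omega : 1 ≤ r)
  have hU2 : U ≤ U ^ 2 := le_self_pow₀ hU1 two_ne_zero
  have hCU : C * U ^ 2 ≤ q := (le_self_pow₀ (by nlinarith) two_ne_zero).trans hq
  have hUq : 2 * U ≤ q := by nlinarith
  have hCq : (C : ℝ) ≤ q := by nlinarith
  have hq0 : (0 : ℝ) < q := by linarith
  have hx : |(p / q : ℝ) - 1| ≤ U / q := by
    rw [div_sub_one hq0.ne', abs_div, abs_of_pos hq0]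
    gcongr
  have hhalf : U / q ≤ 1 / 2 := by
    rw [div_le_div_iff₀ hq0 two_pos]
    linarith
  have hlower := one_le_pow_mul_abs_aeval_padeNum_sub (by exact_mod_cast hq0.ne') hd hne
  have hupper := abs_aeval_padeNum_sub_le hr n (hx.trans hhalf)
    (by positivity : (0 : ℝ) ≤ c / d)
  have hmain := pow_mul_pow_lt_half (n := n) (by linarith) (by linarith)
    (by positivity : (0 : ℝ) < d) hq (by linarith) (by exact_mod_cast hlow)
  have hupp' : (q : ℝ) ^ n ≤ q ^ 2 * (5 * d ^ 2 * C ^ 2) := by exact_mod_cast hupp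
  have herr : (q : ℝ) ^ n * d * (2 * e * C ^ (n + 1)) ≤ 50 * C ^ 5 * q ^ 4 * d ^ 5 * e :=
    calc (q : ℝ) ^ n * d * (2 * e * C ^ (n + 1)) = 2 * e * C * d * (q ^ n * C ^ n) := by ring
      _ ≤ 2 * e * C * d * (q ^ n * q ^ n) := by gcongr
      _ ≤ 2 * e * C * d * (q ^ 2 * (5 * d ^ 2 * C ^ 2) * (q ^ 2 * (5 * d ^ 2 * C ^ 2))) := by
          gcongr
      _ = _ := by ring
  have : (1 : ℝ) ≤ q ^ n * d * (((U / q) ^ (2 * n + 1) + 2 * e) * C ^ (n + 1)) :=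
    hlower.trans (by gcongr; exact hupper.trans (by gcongr))
  linarith

lemma exists_aeval_padeNum_ne {r : ℕ} (hr : 2 ≤ r) (m : ℕ) {x : ℝ} (hx : x ≠ 1) (z : ℝ) :
    ∃ n, m ≤ n ∧ n ≤ m + 1 ∧ aeval x (padeNum r n) ≠ z * aeval x (padeDen r n) := by
  by_contra! h
  refine aeval_padeNum_mul_padeDen_ne hr m hx ?_
  rw [h m le_rfl m.le_succ, h (m + 1) m.le_succ le_rfl]
  ring

/-- The constant of the effective irrationality measure `one_le_mul_abs_div_sub_div_pow` for `r`-th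
roots of rational numbers with denominator `q`. -/
def rootGapConst (r q : ℕ) : ℕ := 100 * padeBound r ^ 5 * q ^ 4

lemma one_le_mul_abs_div_sub_div_pow {r p q : ℕ} {U : ℝ} (hr : 2 ≤ r) (hpq : p ≠ q)
    (hU : |(p : ℝ) - q| ≤ U) (hq : (padeBound r * U ^ 2) ^ 2 ≤ q) (c : ℕ) {d : ℕ} (hd : d ≠ 0) :
    1 ≤ rootGapConst r q * d ^ 5 * |(p / q : ℝ) - (c / d) ^ r| := by
  have hU1 : 1 ≤ U := by
    refine le_trans ?_ hU
    exact_mod_cast Int.one_le_abs (sub_ne_zero.2 (Nat.cast_injective.ne hpq) : (p - q : ℤ) ≠ 0)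
  have hC := two_le_padeBound (by omega : 1 ≤ r)
  have hq1 : 1 < q := by
    have hC' : (2 : ℝ) ≤ padeBound r := by exact_mod_cast hC
    have hCU : 2 ≤ padeBound r * U ^ 2 := by nlinarith [one_le_pow₀ hU1 (n := 2)]
    have : (1 : ℝ) < q := by nlinarith
    exact_mod_cast this
  have hx : (p / q : ℝ) ≠ 1 := by
    rw [Ne, div_eq_one_iff_eq (by positivity)]
    exact_mod_cast hpq
  set Y := 4 * d ^ 2 * padeBound r ^ 2 with hY
  have hY5 : Y + 1 ≤ 5 * d ^ 2 * padeBound r ^ 2 := by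
    have : 0 < d ^ 2 * padeBound r ^ 2 := by positivity
    rw [hY, mul_assoc, mul_assoc]
    omega
  obtain ⟨n, hmn, hnm, hne⟩ := exists_aeval_padeNum_ne hr (Nat.log q Y + 1) hx (c / d)
  unfold rootGapConst
  push_cast
  refine one_le_mul_abs_sub_of_aeval_ne hr hU1 hU hq hd ?_ ?_ hne
  · exact (Nat.lt_pow_succ_log_self hq1 Y).trans_le (Nat.pow_le_pow_right hq1.le hmn)
  · calc q ^ n ≤ q ^ (Nat.log q Y + 2) := Nat.pow_le_pow_right hq1.le hnm
      _ = q ^ 2 * q ^ Nat.log q Y := by ring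
      _ ≤ q ^ 2 * (5 * d ^ 2 * padeBound r ^ 2) := by
        gcongr
        exact (Nat.pow_log_le_self q (by positivity)).trans (by omega)

end IrrationalityMeasure

section SmoothNumbers

lemma exists_eq_pow_of_forall_dvd_factorization {r N : ℕ} (hN : N ≠ 0)
    (h : ∀ p, r ∣ N.factorization p) : ∃ s, N = s ^ r := by
  refine ⟨N.factorization.prod fun p e => p ^ (e / r), ?_⟩
  conv_lhs => rw [← Nat.prod_factorization_pow_eq_self hN]
  rw [Finsupp.prod, Finsupp.prod, ← Finset.prod_pow]
  refine prod_congr rfl fun p _ => ?_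
  rw [← pow_mul, Nat.div_mul_cancel (h p)]

lemma exists_mul_pow_pred_eq_pow_of_mem_smoothNumbers {r B x y : ℕ} (hr : 1 ≤ r)
    (hx : x ∈ Nat.smoothNumbers B) (hy : y ∈ Nat.smoothNumbers B)
    (h : ∀ p < B, (x.factorization p : ZMod r) = y.factorization p) :
    ∃ s, x * y ^ (r - 1) = s ^ r := by
  have hx0 := Nat.ne_zero_of_mem_smoothNumbers hx
  have hy0 := pow_ne_zero (r - 1) (Nat.ne_zero_of_mem_smoothNumbers hy)
  refine exists_eq_pow_of_forall_dvd_factorization (mul_ne_zero hx0 hy0) fun p => ?_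
  simp only [Nat.factorization_mul hx0 hy0, Nat.factorization_pow, Finsupp.add_apply,
    Finsupp.smul_apply, smul_eq_mul]
  rcases lt_or_ge p B with hpB | hpB
  · rw [← ZMod.natCast_eq_zero_iff]
    push_cast [Nat.cast_sub hr]
    rw [h p hpB, ZMod.natCast_self]
    ring
  · have hzero : ∀ {z}, z ∈ Nat.smoothNumbers B → z.factorization p = 0 := fun hz => by
      refine Finsupp.notMem_support_iff.1 fun hp => ?_
      have := Nat.primeFactors_subset_of_mem_smoothNumbers hz hp
      exact hpB.not_gt (Nat.lt_of_mem_primesBelow this)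
    simp [hzero hx, hzero hy]

/- Here `(a + h) * s / (a * t)` is an approximation to the sixth root of `(a + h) / a` which is
too good if `b` is large. -/
lemma finite_setOf_exists_mul_pow_eq_pow {a h : ℕ} (hh : h ≠ 0)
    (ha : (padeBound 6 * h ^ 2) ^ 2 ≤ a) :
    {b : ℕ | ∃ s t, b * a ^ 5 = s ^ 6 ∧ (b + h) * (a + h) ^ 5 = t ^ 6}.Finite := by
  let K := rootGapConst 6 a * a ^ 4 * (a + h) * h
  refine (Set.finite_Iic (K ^ 6 * (a + h) ^ 25)).subset ?_
  rintro b ⟨s, t, hs, ht⟩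
  have ha0 : a ≠ 0 := by
    have := two_le_padeBound (by norm_num : 1 ≤ 6)
    exact (lt_of_lt_of_le (by positivity) ha).ne'
  have ht0 : t ≠ 0 := fun h0 => by simp [h0, hh] at ht
  have hs' : (b : ℝ) * a ^ 5 = s ^ 6 := by exact_mod_cast hs
  have ht' : ((b : ℝ) + h) * (a + h) ^ 5 = t ^ 6 := by exact_mod_cast ht
  have hroot : (((a + h) * s : ℕ) / (a * t : ℕ) : ℝ) ^ 6 = (a + h) * b / (a * (b + h)) := by
    push_cast
    rw [div_pow, mul_pow, mul_pow, ← hs', ← ht']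
    field_simp
  have hdist : ((a + h : ℕ) / a : ℝ) - (((a + h) * s : ℕ) / (a * t : ℕ)) ^ 6 =
      (a + h) * h / (a * (b + h)) := by
    rw [hroot]
    push_cast
    field_simp
    ring
  have hgap := one_le_mul_abs_div_sub_div_pow (U := h) (by norm_num : 2 ≤ 6)
    (by omega : a + h ≠ a) (by simp) (by exact_mod_cast ha) ((a + h) * s) (mul_ne_zero ha0 ht0)
  rw [hdist, abs_of_nonneg (by positivity), mul_div_assoc', le_div_iff₀ (by positivity)] at hgap
  have hle : b + h ≤ K * t ^ 5 := by
    refine Nat.le_of_mul_le_mul_left ?_ (Nat.pos_of_ne_zero ha0)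
    have : a * (b + h) ≤ rootGapConst 6 a * (a * t) ^ 5 * ((a + h) * h) := by
      exact_mod_cast (one_mul (_ : ℝ)).symm.trans_le hgap
    exact this.trans_eq (by ring)
  have hpow : (b + h) ^ 5 * (b + h) ≤ (b + h) ^ 5 * (K ^ 6 * (a + h) ^ 25) :=
    calc (b + h) ^ 5 * (b + h) = (b + h) ^ 6 := by ring
      _ ≤ (K * t ^ 5) ^ 6 := Nat.pow_le_pow_left hle 6
      _ = K ^ 6 * (t ^ 6) ^ 5 := by ring
      _ = _ := by
        rw [← ht]
        ring
  exact le_self_add.trans (Nat.le_of_mul_le_mul_left hpow (by positivity))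

/- Numbers whose exponents agree modulo `6` have a quotient which is a sixth power, and there are
finitely many classes of exponents modulo `6`. -/
lemma finite_setOf_add_mem_smoothNumbers {h : ℕ} (hh : h ≠ 0) (B : ℕ) :
    {x : ℕ | x ∈ Nat.smoothNumbers B ∧ x + h ∈ Nat.smoothNumbers B}.Finite := by
  let expMod (x : ℕ) (p : Fin B) : ZMod 6 := x.factorization p
  refine Set.Finite.of_finite_fibers (fun x => (expMod x, expMod (x + h))) (Set.toFinite _) ?_
  intro c _
  by_contra hinf
  obtain ⟨a, ⟨ha, hac⟩, hlt⟩ := Set.Infinite.exists_gt hinf ((padeBound 6 * h ^ 2) ^ 2)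
  refine hinf ((finite_setOf_exists_mul_pow_eq_pow hh hlt.le).subset ?_)
  rintro b ⟨hb, hbc⟩
  have hab : expMod b = expMod a ∧ expMod (b + h) = expMod (a + h) :=
    Prod.mk.inj (hbc.trans hac.symm)
  obtain ⟨s, hs⟩ := exists_mul_pow_pred_eq_pow_of_mem_smoothNumbers (r := 6) (by norm_num) hb.1
    ha.1 fun p hp => congrFun hab.1 ⟨p, hp⟩
  obtain ⟨t, ht⟩ := exists_mul_pow_pred_eq_pow_of_mem_smoothNumbers (r := 6) (by norm_num) hb.2
    ha.2 fun p hp => congrFun hab.2 ⟨p, hp⟩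
  exact ⟨s, t, hs, ht⟩

lemma finite_setOf_mul_mem_smoothNumbers_natAbs_add {v : ℕ} (hv : v ≠ 0) {u : ℤ} (hu : u ≠ 0)
    (B : ℕ) :
    {n : ℕ | v * n ∈ Nat.smoothNumbers B ∧ (apTerm v u n).natAbs ∈ Nat.smoothNumbers B}.Finite := by
  have hfin := finite_setOf_add_mem_smoothNumbers (Int.natAbs_ne_zero.2 hu) B
  have hinj : Set.InjOn (fun n : ℕ => v * n) Set.univ := (mul_right_injective₀ hv).injOn
  refine (((Set.finite_Iic u.natAbs).union (hfin.union (hfin.image (· + u.natAbs)))).preimage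
    (hinj.mono (Set.subset_univ _))).subset ?_
  rintro n ⟨hn, hn'⟩
  rcases le_or_gt (v * n) u.natAbs with hle | hlt
  · exact Or.inl hle
  refine Or.inr ?_
  have hterm : apTerm v u n = ((v * n : ℕ) : ℤ) + u := by simp [apTerm]
  rcases le_total 0 u with h0 | h0
  · refine Or.inl ⟨hn, ?_⟩
    rwa [show v * n + u.natAbs = (apTerm v u n).natAbs by omega]
  · refine Or.inr ⟨v * n - u.natAbs, ⟨?_, ?_⟩, Nat.sub_add_cancel hlt.le⟩
    · rwa [show v * n - u.natAbs = (apTerm v u n).natAbs by omega]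
    · rwa [Nat.sub_add_cancel hlt.le]

lemma finite_setOf_forall_prime_dvd_le {v : ℕ} (hv : v ≠ 0) {u : ℤ} (hu : u ≠ 0) (B : ℕ) :
    {n : ℕ | ∀ p : ℕ, p.Prime → (p : ℤ) ∣ n * apTerm v u n → p ≤ B}.Finite := by
  refine (finite_setOf_mul_mem_smoothNumbers_natAbs_add hv hu (v + B + 1)).subset fun n hn => ?_
  refine ⟨Nat.mem_smoothNumbers'.2 fun p hp hd => ?_, Nat.mem_smoothNumbers'.2 fun p hp hd => ?_⟩
  · rcases hp.dvd_mul.1 hd with h | h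
    · have := Nat.le_of_dvd (Nat.pos_of_ne_zero hv) h
      omega
    · have := hn p hp ((Int.natCast_dvd_natCast.2 h).mul_right _)
      omega
  · have := hn p hp ((Int.natCast_dvd.2 hd).mul_left _)
    omega

end SmoothNumbers

section Primorial

lemma dvd_choose_of_mod_lt_mod {p n k : ℕ} (hp : p.Prime) (h : n % p < k % p) :
    p ∣ n.choose k := by
  have := Fact.mk hp
  have hmod := Choose.choose_modEq_choose_mod_mul_choose_div_nat (n := n) (k := k) (p := p)
  rw [Nat.choose_eq_zero_of_lt h, zero_mul] at hmod
  exact Nat.modEq_zero_iff_dvd.1 hmod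

lemma dvd_choose_mul_choose {p m : ℕ} (hp : p.Prime) (hm : m < p) (hpm : p ≤ 6 * m) :
    p ∣ (6 * m).choose (3 * m) * (3 * m).choose m := by
  have hmod : ∀ c n, c * p ≤ n → n < (c + 1) * p → n % p = n - c * p := fun c n h h' => by
    rw [Nat.mod_eq_sub_div_mul, Nat.div_eq_of_lt_le h h']
  have h0 := Nat.mod_eq_of_lt hm
  suffices 6 * m % p < 3 * m % p ∨ 3 * m % p < m % p from
    this.elim (fun h => (dvd_choose_of_mod_lt_mod hp h).mul_right _)
      fun h => (dvd_choose_of_mod_lt_mod hp h).mul_left _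
  rcases lt_or_ge (3 * m) p with h3 | h3
  · have := hmod 1 (6 * m) (by omega) (by omega)
    have := Nat.mod_eq_of_lt h3
    omega
  rcases lt_or_ge (2 * m) p with h2 | h2
  · have := hmod 1 (3 * m) (by omega) (by omega)
    omega
  rcases lt_or_ge (3 * m) (2 * p) with h32 | h32
  · have := hmod 3 (6 * m) (by omega) (by omega)
    have := hmod 1 (3 * m) (by omega) (by omega)
    omega
  · have := hmod 2 (3 * m) (by omega) (by omega)
    omega

lemma primorial_six_mul_le (m : ℕ) : primorial (6 * m) ≤ primorial m * 432 ^ m := by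
  have hdvd : primorial (6 * m) ∣ primorial m * ((6 * m).choose (3 * m) * (3 * m).choose m) := by
    refine prod_primes_dvd _ (fun p hp => (mem_filter.1 hp).2.prime) fun p hp => ?_
    obtain ⟨hpm, hp⟩ := mem_filter.1 hp
    rcases le_or_gt p m with h | h
    · exact ((hp.dvd_primorial_iff).2 h).mul_right _
    · exact (dvd_choose_mul_choose hp h (by simpa using hpm)).mul_left _
  have hpos : 0 < primorial m * ((6 * m).choose (3 * m) * (3 * m).choose m) :=
    Nat.mul_pos (primorial_pos m)
      (Nat.mul_pos (Nat.choose_pos (by omega)) (Nat.choose_pos (by omega)))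
  refine (Nat.le_of_dvd hpos hdvd).trans (Nat.mul_le_mul_left _ ?_)
  have hbinom : (3 * m).choose m * 4 ^ m ≤ 27 ^ m :=
    calc (3 * m).choose m * 4 ^ m = 1 ^ m * 2 ^ (3 * m - m) * (3 * m).choose m := by
          rw [one_pow, one_mul, show 3 * m - m = 2 * m by omega, pow_mul, mul_comm]
          norm_num
      _ ≤ (1 + 2) ^ (3 * m) := by
          rw [add_pow]
          exact single_le_sum (f := fun i => 1 ^ i * 2 ^ (3 * m - i) * (3 * m).choose i)
            (fun i _ => Nat.zero_le _) (mem_range.2 (by omega))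
      _ = 27 ^ m := by
          rw [pow_mul]
          norm_num
  calc (6 * m).choose (3 * m) * (3 * m).choose m
      ≤ 2 ^ (6 * m) * (3 * m).choose m := by
        gcongr
        exact Nat.choose_le_two_pow _ _
    _ = 16 ^ m * ((3 * m).choose m * 4 ^ m) := by
        rw [pow_mul, show 2 ^ 6 = 16 * 4 by norm_num, mul_pow]
        ring
    _ ≤ 16 ^ m * 27 ^ m := by gcongr
    _ = 432 ^ m := by rw [← mul_pow]; norm_num

/- The growth rate `7 / 2` of the primorial is what matters: it is smaller than the growth rate `4`
of the central binomial coefficient. It comes from `2 ^ 5 * 432 < 7 ^ 5`. -/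
lemma exists_two_pow_mul_primorial_le : ∃ A : ℕ, ∀ x, 2 ^ x * primorial x ≤ A * 7 ^ x := by
  obtain ⟨N, hN0, hN⟩ : ∃ N, 0 < N ∧ 13824 ^ N * 7 ^ 5 ≤ 16807 ^ N := ⟨50, by norm_num⟩
  refine ⟨8 ^ (6 * N), fun x => ?_⟩
  induction x using Nat.strong_induction_on with
  | _ x ih =>
  rcases le_or_gt x (6 * N) with hx | hx
  · calc 2 ^ x * primorial x ≤ 2 ^ x * 4 ^ x := by gcongr; exact primorial_le_four_pow x
      _ = 8 ^ x := by rw [← mul_pow]; norm_num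
      _ ≤ 8 ^ (6 * N) := Nat.pow_le_pow_right (by norm_num) hx
      _ ≤ _ := Nat.le_mul_of_pos_right _ (by positivity)
  obtain ⟨n, hxn, hnx⟩ : ∃ n, x ≤ 6 * n ∧ 6 * n ≤ x + 5 := ⟨(x + 5) / 6, by omega, by omega⟩
  obtain ⟨d, rfl⟩ := Nat.exists_eq_add_of_le (by omega : N ≤ n)
  refine Nat.le_of_mul_le_mul_right ?_ (by positivity : 0 < 7 ^ 5)
  calc 2 ^ x * primorial x * 7 ^ 5
      ≤ 2 ^ (6 * (N + d)) * (primorial (N + d) * 432 ^ (N + d)) * 7 ^ 5 := by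
        gcongr
        · norm_num
        · exact (primorial_mono hxn).trans (primorial_six_mul_le _)
    _ = 2 ^ (N + d) * primorial (N + d) * ((13824 ^ N * 7 ^ 5) * 13824 ^ d) := by
        rw [pow_mul, show 2 ^ 6 = 2 * 2 ^ 5 by norm_num, show 13824 = 2 ^ 5 * 432 by norm_num,
          mul_pow, mul_pow, mul_pow]
        ring
    _ ≤ 8 ^ (6 * N) * 7 ^ (N + d) * (16807 ^ N * 16807 ^ d) := by
        refine Nat.mul_le_mul (ih _ (by omega)) (Nat.mul_le_mul hN ?_)
        gcongr
        norm_num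
    _ = 8 ^ (6 * N) * 7 ^ (6 * (N + d)) := by
        rw [pow_mul 7, show 7 ^ 6 = 7 * 16807 by norm_num, mul_pow]
        ring
    _ ≤ 8 ^ (6 * N) * 7 ^ (x + 5) := by
        gcongr
        norm_num
    _ = _ := by ring

end Primorial

section LargePrimeDivisor

variable {v : ℕ} {u : ℤ} {k n c K Y : ℕ}

lemma apProd_le (hv : 1 ≤ v) (u : ℤ) (K : ℕ) :
    apProd v u 0 K ≤ v ^ K * (K + u.natAbs).factorial := by
  induction K with
  | zero => simpa [apProd] using Nat.one_le_iff_ne_zero.2 (Nat.factorial_ne_zero _)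
  | succ K ih =>
    have hterm : (apTerm v u (K + 1)).natAbs ≤ v * (K + u.natAbs + 1) := by
      have := natAbs_apTerm_le v u (le_refl (K + 1))
      nlinarith [Nat.le_mul_of_pos_left u.natAbs hv]
    rw [apProd, prod_Ioc_succ_top (Nat.zero_le _), ← apProd, add_right_comm, Nat.factorial_succ]
    calc _ ≤ (v ^ K * (K + u.natAbs).factorial) * (v * (K + u.natAbs + 1)) :=
          Nat.mul_le_mul ih hterm
      _ = _ := by ring

lemma mul_sub_natAbs_le_natAbs_apTerm (v : ℕ) (u : ℤ) (i : ℕ) :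
    v * (i - u.natAbs) ≤ (apTerm v u i).natAbs := by
  rcases Nat.eq_zero_or_pos v with rfl | hv
  · simp
  have hle := Nat.le_mul_of_pos_left u.natAbs hv
  have hterm : apTerm v u i = ((v * i : ℕ) : ℤ) + u := by simp [apTerm]
  rw [Nat.mul_sub]
  omega

lemma pow_mul_descFactorial_le_apProd (v : ℕ) (u : ℤ) (hk : k ≤ n) :
    v ^ k * (n - u.natAbs).descFactorial k ≤ apProd v u (n - k) n := by
  induction k with
  | zero => simp [apProd]
  | succ k ih =>
    have hsplit : apProd v u (n - (k + 1)) n =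
        (apTerm v u (n - k)).natAbs * apProd v u (n - k) n := by
      rw [apProd, ← prod_Ioc_consecutive _ (by omega : n - (k + 1) ≤ n - k) (Nat.sub_le n k),
        show n - k = n - (k + 1) + 1 by omega, prod_Ioc_succ_top le_rfl, Ioc_self, prod_empty,
        one_mul, apProd]
    rw [hsplit, Nat.descFactorial_succ, pow_succ, Nat.sub_right_comm]
    calc _ = (v * (n - k - u.natAbs)) * (v ^ k * (n - u.natAbs).descFactorial k) := by ring
      _ ≤ _ := Nat.mul_le_mul (mul_sub_natAbs_le_natAbs_apTerm v u _) (ih (by omega))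

lemma factorization_primorial {p : ℕ} (hp : p.Prime) (n : ℕ) :
    (primorial n).factorization p = if p ≤ n then 1 else 0 := by
  split_ifs with h
  · exact Nat.factorization_eq_one_of_squarefree (squarefree_primorial n) hp
      (hp.dvd_primorial_iff.2 h)
  · exact Nat.factorization_eq_zero_of_not_dvd fun hd => h (hp.dvd_primorial_iff.1 hd)

lemma factorization_apProd_le_add_factorization_primorial (huv : IsCoprime (v : ℤ) u)
    (hne : ∀ i, 1 ≤ i → apTerm v u i ≠ 0) (hk : k ≤ K) (hKn : K ≤ n) {p : ℕ} (hp : p.Prime)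
    (hdvd : K < p → p ∣ apProd v u (n - k) n → p ∣ apProd v u 0 K)
    (hY : K ≤ Y ∧ v * K + u.natAbs ≤ Y ∨ v * n + u.natAbs < (Y + 1) ^ 2) (hpY : Y < p) :
    (apProd v u (n - k) n).factorization p ≤
      (apProd v u 0 K).factorization p + (primorial K).factorization p := by
  rcases hY with ⟨hKY, hvY⟩ | hY
  · rw [Nat.factorization_eq_zero_of_not_dvd]
    · exact Nat.zero_le _
    · exact fun hd => not_dvd_apProd_of_lt hne hp (by omega) (hdvd (by omega) hd)
  have hMp : v * n + u.natAbs < p ^ 2 := hY.trans_le (Nat.pow_le_pow_left hpY 2)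
  rw [factorization_primorial hp]
  split_ifs with hpK
  · have hle := factorization_apProd_le_add_log huv hne hp (Nat.sub_le n k)
      (by omega : n - (n - k) ≤ K) hKn fun i _ hi => natAbs_apTerm_le v u hi
    have hlog := Nat.lt_succ_iff.1 (Nat.log_lt_of_lt_pow' two_ne_zero hMp)
    exact hle.trans (Nat.add_le_add_left hlog _)
  · exact factorization_apProd_le_of_lt_sq huv hne hp (Nat.sub_le n k) (by omega) hMp
      (fun i hi => natAbs_apTerm_le v u (mem_Ioc.1 hi).2) (hdvd (by omega))

lemma apProd_dvd_mul_primorial_mul_prod (huv : IsCoprime (v : ℤ) u)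
    (hne : ∀ i, 1 ≤ i → apTerm v u i ≠ 0) (hk : k ≤ K) (hKn : K ≤ n)
    (hdvd : ∀ p, p.Prime → K < p → p ∣ apProd v u (n - k) n → p ∣ apProd v u 0 K)
    (hY : K ≤ Y ∧ v * K + u.natAbs ≤ Y ∨ v * n + u.natAbs < (Y + 1) ^ 2) :
    apProd v u (n - k) n ∣ apProd v u 0 K * primorial K *
      ∏ p ∈ Nat.primesLE Y, p ^ Nat.log p (v * n + u.natAbs) := by
  set M := v * n + u.natAbs with hM
  have hprod : ∏ p ∈ Nat.primesLE Y, p ^ Nat.log p M ≠ 0 :=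
    prod_ne_zero_iff.2 fun p hp => pow_ne_zero _ (Nat.prime_of_mem_primesLE hp).ne_zero
  have hR := apProd_ne_zero hne 0 K
  have hP := primorial_ne_zero K
  rw [← Nat.factorization_prime_le_iff_dvd (apProd_ne_zero hne _ _)
    (mul_ne_zero (mul_ne_zero hR hP) hprod)]
  intro p hp
  rw [Nat.factorization_mul (mul_ne_zero hR hP) hprod, Nat.factorization_mul hR hP,
    Finsupp.add_apply, Finsupp.add_apply]
  rcases le_or_gt p Y with hpY | hpY
  · have hlog : Nat.log p M ≤ (∏ p ∈ Nat.primesLE Y, p ^ Nat.log p M).factorization p := by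
      rw [← hp.pow_dvd_iff_le_factorization hprod]
      exact dvd_prod_of_mem (fun p => p ^ Nat.log p M) (Nat.mem_primesLE.2 ⟨hpY, hp⟩)
    have := factorization_apProd_le_add_log huv hne hp (Nat.sub_le n k)
      (by omega : n - (n - k) ≤ K) hKn fun i _ hi => natAbs_apTerm_le v u hi
    rw [← hM] at this
    omega
  · exact (factorization_apProd_le_add_factorization_primorial huv hne hk hKn hp (hdvd p hp) hY
      hpY).trans (Nat.le_add_right _ _)

lemma prod_primesLE_pow_log_le {M : ℕ} (hM : M ≠ 0) (Y : ℕ) :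
    ∏ p ∈ Nat.primesLE Y, p ^ Nat.log p M ≤ M ^ Y.primeCounting := by
  rw [← Nat.primesLE_card_eq_primeCounting]
  exact prod_le_pow_card _ _ _ fun p _ => Nat.pow_log_le_self p hM

lemma choose_le_pow_mul_choose_sub {w : ℕ} (h : k + w ≤ n) :
    n.choose k ≤ n ^ w * (n - w).choose k := by
  induction w with
  | zero => simp
  | succ w ih =>
    obtain ⟨m, hm⟩ : ∃ m, n - w = m + 1 := ⟨n - w - 1, by omega⟩
    have hstep : (m + 1).choose k ≤ n * m.choose k :=
      calc (m + 1).choose k ≤ (m + 1).choose k * (m + 1 - k) :=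
            Nat.le_mul_of_pos_right _ (by omega)
        _ = m.choose k * (m + 1) := (Nat.choose_mul_succ_eq m k).symm
        _ ≤ n * m.choose k := by
            rw [mul_comm]
            exact Nat.mul_le_mul_right _ (by omega)
    refine (ih (by omega)).trans ?_
    rw [show n - (w + 1) = m by omega, hm, pow_succ, mul_assoc]
    exact Nat.mul_le_mul_left _ hstep

lemma choose_sub_natAbs_le (hv : 1 ≤ v) (huv : IsCoprime (v : ℤ) u)
    (hne : ∀ i, 1 ≤ i → apTerm v u i ≠ 0) (hkn : k + c + v + u.natAbs ≤ n)
    (hdvd : ∀ p, p.Prime → k + c < p → p ∣ apProd v u (n - k) n → p ∣ apProd v u 0 (k + c))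
    (hY : k + c ≤ Y ∧ v * (k + c) + u.natAbs ≤ Y ∨ v * n + u.natAbs < (Y + 1) ^ 2) :
    (n - u.natAbs).choose k ≤
      v ^ c * n ^ (c + u.natAbs) * primorial (k + c) * n ^ (2 * Y.primeCounting) := by
  have hpos : 0 < apProd v u 0 (k + c) * primorial (k + c) *
      ∏ p ∈ Nat.primesLE Y, p ^ Nat.log p (v * n + u.natAbs) :=
    Nat.mul_pos (Nat.mul_pos (Nat.pos_of_ne_zero (apProd_ne_zero hne _ _)) (primorial_pos _))
      (prod_pos fun p hp => pow_pos (Nat.prime_of_mem_primesLE hp).pos _)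
  have hle := Nat.le_of_dvd hpos
    (apProd_dvd_mul_primorial_mul_prod huv hne (Nat.le_add_right k c) (by omega) hdvd hY)
  have hprod : ∏ p ∈ Nat.primesLE Y, p ^ Nat.log p (v * n + u.natAbs) ≤
      n ^ (2 * Y.primeCounting) := by
    have hn : 0 < v * n := Nat.mul_pos hv (by omega)
    have hsq : (v + u.natAbs) * n ≤ n * n := Nat.mul_le_mul_right _ (by omega)
    have hu : u.natAbs ≤ u.natAbs * n := Nat.le_mul_of_pos_right _ (by omega)
    rw [pow_mul]
    refine (prod_primesLE_pow_log_le (by omega) Y).trans (Nat.pow_le_pow_left ?_ _)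
    linarith
  have hfact : (k + c + u.natAbs).factorial ≤ k.factorial * n ^ (c + u.natAbs) := by
    rw [add_assoc, ← Nat.factorial_mul_ascFactorial]
    exact Nat.mul_le_mul_left _ ((Nat.ascFactorial_le_pow_add _ _).trans
      (Nat.pow_le_pow_left (by omega) _))
  refine Nat.le_of_mul_le_mul_left ?_ (by positivity : 0 < v ^ k * k.factorial)
  calc v ^ k * k.factorial * (n - u.natAbs).choose k
      = v ^ k * (n - u.natAbs).descFactorial k := by
        rw [Nat.descFactorial_eq_factorial_mul_choose, mul_assoc]
    _ ≤ apProd v u (n - k) n := pow_mul_descFactorial_le_apProd v u (by omega)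
    _ ≤ v ^ (k + c) * (k.factorial * n ^ (c + u.natAbs)) * primorial (k + c) *
          n ^ (2 * Y.primeCounting) :=
        hle.trans (by gcongr; exact (apProd_le hv u _).trans (Nat.mul_le_mul_left _ hfact))
    _ = _ := by ring

lemma choose_le_of_forall_prime_dvd (hv : 1 ≤ v) (huv : IsCoprime (v : ℤ) u)
    (hne : ∀ i, 1 ≤ i → apTerm v u i ≠ 0) (hkn : k + c + v + u.natAbs ≤ n)
    (hdvd : ∀ p, p.Prime → k + c < p → p ∣ apProd v u (n - k) n → p ∣ apProd v u 0 (k + c))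
    (hY : k + c ≤ Y ∧ v * (k + c) + u.natAbs ≤ Y ∨ v * n + u.natAbs < (Y + 1) ^ 2) :
    n.choose k ≤ n ^ (2 * (c + u.natAbs)) * primorial (k + c) * n ^ (2 * Y.primeCounting) :=
  calc n.choose k ≤ n ^ u.natAbs * (n - u.natAbs).choose k :=
        choose_le_pow_mul_choose_sub (by omega)
    _ ≤ n ^ u.natAbs * (n ^ c * n ^ (c + u.natAbs) * primorial (k + c) *
          n ^ (2 * Y.primeCounting)) := by
        gcongr
        refine (choose_sub_natAbs_le hv huv hne hkn hdvd hY).trans ?_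
        gcongr
        omega
    _ = _ := by ring

end LargePrimeDivisor

section BinomialLowerBounds

lemma exists_mul_primeCounting_le (D : ℕ) : ∃ N : ℕ, ∀ x, N ≤ x → D * x.primeCounting ≤ x := by
  have hpi := Chebyshev.eventually_primeCounting_le (ε := 1) one_pos
  have hlarge := Real.tendsto_log_atTop.eventually_ge_atTop (D * (Real.log 4 + 1) + 1)
  obtain ⟨N, hN⟩ := Filter.eventually_atTop.1
    (tendsto_natCast_atTop_atTop.eventually (hpi.and hlarge))
  refine ⟨N, fun x hx => ?_⟩
  obtain ⟨hpix, hlogx⟩ := hN x hx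
  have h4 : 0 ≤ Real.log 4 := Real.log_nonneg (by norm_num)
  have hlog : 0 < Real.log x := lt_of_lt_of_le (by positivity) hlogx
  rw [Nat.floor_natCast, le_div_iff₀ hlog] at hpix
  have hmul : (D : ℝ) * x.primeCounting * Real.log x ≤ x * Real.log x := by
    calc (D : ℝ) * x.primeCounting * Real.log x = D * (x.primeCounting * Real.log x) := by ring
      _ ≤ D * ((Real.log 4 + 1) * x) := by gcongr
      _ = x * (D * (Real.log 4 + 1)) := by ring
      _ ≤ x * Real.log x := by gcongr; linarith
  exact_mod_cast le_of_mul_le_mul_right hmul hlog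

lemma primeCounting_le_self (n : ℕ) : n.primeCounting ≤ n := by
  rw [← Nat.primesLE_card_eq_primeCounting, Nat.primesLE_eq_filter_Ioc_zero]
  exact (card_filter_le _ _).trans (by simp)

lemma pow_le_mul_choose {n k : ℕ} (h : 2 * k ≤ n) : n ^ k ≤ (2 * k) ^ k * n.choose k := by
  calc n ^ k ≤ (2 * (n + 1 - k)) ^ k := Nat.pow_le_pow_left (by omega) _
    _ = 2 ^ k * (n + 1 - k) ^ k := mul_pow _ _ _
    _ ≤ 2 ^ k * n.descFactorial k := Nat.mul_le_mul_left _ (Nat.pow_sub_le_descFactorial n k)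
    _ = 2 ^ k * (k.factorial * n.choose k) := by rw [Nat.descFactorial_eq_factorial_mul_choose]
    _ ≤ 2 ^ k * (k ^ k * n.choose k) := by gcongr; exact Nat.factorial_le_pow k
    _ = _ := by rw [mul_pow, mul_assoc]

lemma pow_le_mul_choose_pow_four {n k : ℕ} (hkn : 2 * k ≤ n) (h : k ^ 4 ≤ n ^ 3) :
    n ^ k ≤ 16 ^ k * n.choose k ^ 4 := by
  rcases Nat.eq_zero_or_pos n with rfl | hn
  · simp [show k = 0 by omega]
  refine Nat.le_of_mul_le_mul_left ?_ (by positivity : 0 < n ^ (3 * k))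
  calc n ^ (3 * k) * n ^ k = (n ^ k) ^ 4 := by ring
    _ ≤ ((2 * k) ^ k * n.choose k) ^ 4 := Nat.pow_le_pow_left (pow_le_mul_choose hkn) 4
    _ = (2 ^ 4) ^ k * (k ^ 4) ^ k * n.choose k ^ 4 := by
        simp only [mul_pow, ← pow_mul]
        ring
    _ ≤ (2 ^ 4) ^ k * (n ^ 3) ^ k * n.choose k ^ 4 := by gcongr
    _ = n ^ (3 * k) * (16 ^ k * n.choose k ^ 4) := by rw [← pow_mul n]; ring

lemma lt_choose_of_pow_four_le {n k c E P : ℕ} (hk : 1 ≤ k) (hkn : 2 * k ≤ n) (hck : c ≤ k)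
    (hE : 16 * E ≤ k) (hP : 32 * P ≤ k) (h : k ^ 4 ≤ n ^ 3) (hn : 2 ^ 40 < n) :
    n ^ E * primorial (k + c) * n ^ (2 * P) < n.choose k := by
  by_contra! hle
  have hchoose : n.choose k ≤ n ^ (E + 2 * P) * 4 ^ (2 * k) := by
    calc n.choose k ≤ n ^ (E + 2 * P) * primorial (k + c) := hle.trans_eq (by ring)
      _ ≤ n ^ (E + 2 * P) * 4 ^ (2 * k) := by
        gcongr
        exact (primorial_le_four_pow _).trans (Nat.pow_le_pow_right (by norm_num) (by omega))
  have hsq : n ^ k * n ^ k ≤ (2 ^ 40) ^ k * n ^ k := by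
    calc n ^ k * n ^ k = (n ^ k) ^ 2 := (sq _).symm
      _ ≤ ((2 ^ 4) ^ k * (n ^ (E + 2 * P) * (2 ^ 2) ^ (2 * k)) ^ 4) ^ 2 :=
        Nat.pow_le_pow_left ((pow_le_mul_choose_pow_four hkn h).trans
          (Nat.mul_le_mul_left _ (Nat.pow_le_pow_left hchoose 4))) 2
      _ = (2 ^ 40) ^ k * n ^ (8 * E + 16 * P) := by
        simp only [← pow_mul, mul_pow]
        ring
      _ ≤ (2 ^ 40) ^ k * n ^ k := by gcongr <;> omega
  have hpow : n ^ k ≤ (2 ^ 40) ^ k := Nat.le_of_mul_le_mul_right hsq (by positivity)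
  exact hn.not_ge ((Nat.pow_le_pow_iff_left (by omega)).1 hpow)

lemma exists_lt_choose_of_pow_four_le (E c D : ℕ) : ∃ k₀, ∀ n k Y, k₀ ≤ k → 2 * k ≤ n →
    k ^ 4 ≤ n ^ 3 → Y ≤ D * k →
      n ^ E * primorial (k + c) * n ^ (2 * Y.primeCounting) < n.choose k := by
  obtain ⟨N, hN⟩ := exists_mul_primeCounting_le (32 * (D + 1))
  refine ⟨1 + c + 16 * E + N + 2 ^ 40, fun n k Y hk hkn h hY => ?_⟩
  have hpi : 32 * Y.primeCounting ≤ k := by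
    refine Nat.le_of_mul_le_mul_left ?_ D.add_one_pos
    have hDk := Nat.le_mul_of_pos_left k D.add_one_pos
    calc (D + 1) * (32 * Y.primeCounting) = 32 * (D + 1) * Y.primeCounting := by ring
      _ ≤ 32 * (D + 1) * ((D + 1) * k).primeCounting :=
        Nat.mul_le_mul_left _ (Nat.monotone_primeCounting (hY.trans (by gcongr; omega)))
      _ ≤ (D + 1) * k := hN _ (by omega)
  exact lt_choose_of_pow_four_le (by omega) hkn (by omega) (by omega) hpi h (by omega)

lemma eventually_add_log_le_rpow (a b c : ℝ) {δ : ℝ} (hδ : 0 < δ) : ∀ᶠ x : ℝ in Filter.atTop,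
    a + (b + c * √x) * Real.log x ≤ δ * x ^ (3 / 4 : ℝ) := by
  have hconst : (fun _ : ℝ => a) =o[Filter.atTop] fun x => x ^ (3 / 4 : ℝ) :=
    Asymptotics.isLittleO_const_left.2 <| .inr <|
      tendsto_norm_atTop_atTop.comp (tendsto_rpow_atTop (by norm_num))
  have hlog : (fun x => b * Real.log x) =o[Filter.atTop] fun x => x ^ (3 / 4 : ℝ) :=
    (isLittleO_log_rpow_atTop (by norm_num)).const_mul_left b
  have hsqrt : (fun x => c * (√x * Real.log x)) =o[Filter.atTop] fun x => x ^ (3 / 4 : ℝ) := by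
    refine (((Asymptotics.isBigO_refl (fun x : ℝ => √x) _).mul_isLittleO
      (isLittleO_log_rpow_atTop (by norm_num : (0 : ℝ) < 1 / 4))).congr' .rfl ?_).const_mul_left c
    filter_upwards [Filter.eventually_gt_atTop 0] with x hx
    rw [Real.sqrt_eq_rpow, ← Real.rpow_add hx]
    norm_num
  filter_upwards [((hconst.add hlog).add hsqrt).bound hδ, Filter.eventually_ge_atTop 0]
    with x hx hx0
  rw [Real.norm_of_nonneg (Real.rpow_nonneg hx0 _)] at hx
  calc a + (b + c * √x) * Real.log x = a + b * Real.log x + c * (√x * Real.log x) := by ring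
    _ ≤ _ := (Real.le_norm_self _).trans hx

lemma exists_mul_pow_lt_of_pow_three_lt (E A V : ℕ) : ∃ N : ℕ, ∀ n k P : ℕ, N ≤ n →
    n ^ 3 < k ^ 4 → P ^ 2 ≤ V * n → 7 ^ k * A * n ^ (E + 2 * P) < 8 ^ k := by
  have hδ : 0 < Real.log 8 - Real.log 7 :=
    sub_pos.2 (Real.log_lt_log (by norm_num) (by norm_num))
  obtain ⟨N, hN⟩ := Filter.eventually_atTop.1 <| tendsto_natCast_atTop_atTop.eventually
    (eventually_add_log_le_rpow (Real.log A) E (2 * √V) hδ)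
  refine ⟨N + 1, fun n k P hn hk hP => ?_⟩
  rcases Nat.eq_zero_or_pos A with rfl | hA
  · simp
  have hn0 : 0 < n := by omega
  have hk' : (n : ℝ) ^ (3 / 4 : ℝ) < k := by
    refine lt_of_pow_lt_pow_left₀ 4 (by positivity) ?_
    rw [← Real.rpow_mul_natCast (by positivity)]
    norm_num
    exact_mod_cast hk
  have hP' : (P : ℝ) ≤ √V * √n := by
    rw [← Real.sqrt_mul (by positivity)]
    exact Real.le_sqrt_of_sq_le (by exact_mod_cast hP)
  have hlog : Real.log (7 ^ k * A * n ^ (E + 2 * P)) < Real.log (8 ^ k) := by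
    rw [Real.log_mul (by positivity) (by positivity), Real.log_mul (by positivity) (by positivity),
      Real.log_pow, Real.log_pow, Real.log_pow]
    push_cast
    calc k * Real.log 7 + Real.log A + (E + 2 * P) * Real.log n
        ≤ k * Real.log 7 + (Real.log A + (E + 2 * √V * √n) * Real.log n) := by
          rw [add_assoc, mul_assoc 2]
          gcongr
      _ ≤ k * Real.log 7 + (Real.log 8 - Real.log 7) * (n : ℝ) ^ (3 / 4 : ℝ) := by
          gcongr
          exact hN n (by omega)
      _ < k * Real.log 7 + (Real.log 8 - Real.log 7) * k := by gcongr
      _ = k * Real.log 8 := by ring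
  exact_mod_cast (Real.log_lt_log_iff (by positivity) (by positivity)).1 hlog

lemma exists_lt_choose_of_pow_three_lt (E c V : ℕ) : ∃ N, ∀ n k Y, N ≤ n → 1 ≤ k → 2 * k ≤ n →
    n ^ 3 < k ^ 4 → Y ^ 2 ≤ V * n →
      n ^ E * primorial (k + c) * n ^ (2 * Y.primeCounting) < n.choose k := by
  obtain ⟨A, hA⟩ := exists_two_pow_mul_primorial_le
  obtain ⟨N, hN⟩ := exists_mul_pow_lt_of_pow_three_lt (E + 1) (A * 7 ^ c) V
  refine ⟨N, fun n k Y hn hk hkn h hY => ?_⟩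
  have hcentral : 4 ^ k ≤ n * n.choose k := by
    refine (Nat.four_pow_le_two_mul_self_mul_centralBinom k hk).trans ?_
    rw [Nat.centralBinom_eq_two_mul_choose]
    exact Nat.mul_le_mul hkn (Nat.choose_le_choose k hkn)
  refine lt_of_mul_lt_mul_left' (a := 2 ^ (k + c) * n) ?_
  calc 2 ^ (k + c) * n * (n ^ E * primorial (k + c) * n ^ (2 * Y.primeCounting))
      = (2 ^ (k + c) * primorial (k + c)) * n ^ (E + 1 + 2 * Y.primeCounting) := by ring
    _ ≤ (A * 7 ^ (k + c)) * n ^ (E + 1 + 2 * Y) := by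
        refine Nat.mul_le_mul (hA _) (Nat.pow_le_pow_right (by omega) ?_)
        gcongr
        exact primeCounting_le_self Y
    _ = 7 ^ k * (A * 7 ^ c) * n ^ (E + 1 + 2 * Y) := by ring
    _ < 8 ^ k := hN n k Y hn h hY
    _ = 2 ^ k * 4 ^ k := by rw [← mul_pow]; norm_num
    _ ≤ 2 ^ (k + c) * (n * n.choose k) := by
        gcongr
        · norm_num
        · omega
    _ = 2 ^ (k + c) * n * n.choose k := by ring

end BinomialLowerBounds

lemma exists_prime_dvd_apProd {v : ℕ} (hv : 1 ≤ v) {u : ℤ} (huv : IsCoprime (v : ℤ) u)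
    (hne : ∀ i, 1 ≤ i → apTerm v u i ≠ 0) (c : ℕ) :
    ∃ k₀ n₀ : ℕ, ∀ k n, k₀ ≤ k → n₀ ≤ n → 2 * k ≤ n →
      ∃ p, p.Prime ∧ k + c < p ∧ p ∣ apProd v u (n - k) n ∧ ¬ p ∣ apProd v u 0 (k + c) := by
  set w := u.natAbs
  obtain ⟨k₀, hk₀⟩ :=
    exists_lt_choose_of_pow_four_le (2 * (c + w)) c ((v + 1) * (1 + c) + w)
  obtain ⟨n₀, hn₀⟩ := exists_lt_choose_of_pow_three_lt (2 * (c + w)) c (v + w)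
  refine ⟨k₀ + 1, n₀ + 2 * (c + v + w) + 1, fun k n hk hn hkn => ?_⟩
  by_contra! h
  have hchoose (Y : ℕ) (hY : k + c ≤ Y ∧ v * (k + c) + w ≤ Y ∨ v * n + w < (Y + 1) ^ 2) :=
    choose_le_of_forall_prime_dvd hv huv hne (by omega) h hY
  rcases le_or_gt (k ^ 4) (n ^ 3) with hkn' | hkn'
  · refine (hk₀ n k ((v + 1) * (k + c) + w) (by omega) hkn hkn' ?_).not_ge
      (hchoose _ (.inl ⟨by nlinarith, by nlinarith⟩))
    calc (v + 1) * (k + c) + w ≤ (v + 1) * (k + c * k) + w * k := by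
          gcongr <;> exact Nat.le_mul_of_pos_right _ (by omega)
      _ = ((v + 1) * (1 + c) + w) * k := by ring
  · refine (hn₀ n k (v * n + w).sqrt (by omega) (by omega) hkn hkn' ?_).not_ge
      (hchoose _ (.inr (Nat.lt_succ_sqrt' _)))
    calc (v * n + w).sqrt ^ 2 ≤ v * n + w := Nat.sqrt_le' _
      _ ≤ v * n + w * n := by gcongr; exact Nat.le_mul_of_pos_right _ (by omega)
      _ = (v + w) * n := by ring

section MonicLaguerre

/-- The integral, monic rescaling `v^n n! L_n^(u/v)(-x/v)` of a Laguerre polynomial. -/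
def monicLaguerre (v : ℕ) (u : ℤ) (n : ℕ) : ℤ[X] :=
  ∑ j ∈ range (n + 1), C (n.choose j * ∏ i ∈ Ioc j n, apTerm v u i) * X ^ j

/-- There is a prime `p` whose Newton polygon for `monicLaguerre v u n` rules out factors of
degree `k`: more than `n - k` of the lowest coefficients are divisible by `p`, while all slopes
are less than `1 / k`. -/
def ExcludesFactor (v : ℕ) (u : ℤ) (n k : ℕ) : Prop :=
  ∃ p l : ℕ, p.Prime ∧ l < k ∧ (∀ j < n - l, (p : ℤ) ∣ (monicLaguerre v u n).coeff j) ∧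
    ∀ j, 1 ≤ j → k * (apProd v u 0 j).factorization p < j

variable {v : ℕ} {u : ℤ} {n : ℕ}

lemma coeff_monicLaguerre (v : ℕ) (u : ℤ) (n j : ℕ) :
    (monicLaguerre v u n).coeff j = n.choose j * ∏ i ∈ Ioc j n, apTerm v u i := by
  simp only [monicLaguerre, finsetSum_coeff, coeff_C_mul_X_pow]
  rw [sum_ite_eq (range (n + 1)) j fun j => (n.choose j : ℤ) * ∏ i ∈ Ioc j n, apTerm v u i]
  split_ifs with h
  · rfl
  · rw [mem_range] at h
    rw [Nat.choose_eq_zero_of_lt (by omega), Nat.cast_zero, zero_mul]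

lemma natDegree_monicLaguerre (v : ℕ) (u : ℤ) (n : ℕ) : (monicLaguerre v u n).natDegree = n := by
  refine natDegree_eq_of_le_of_coeff_ne_zero ?_ (by simp [coeff_monicLaguerre])
  refine natDegree_le_iff_coeff_eq_zero.2 fun j hj => ?_
  rw [coeff_monicLaguerre, Nat.choose_eq_zero_of_lt hj, Nat.cast_zero, zero_mul]

lemma monic_monicLaguerre (v : ℕ) (u : ℤ) (n : ℕ) : (monicLaguerre v u n).Monic :=
  monic_of_natDegree_le_of_coeff_eq_one n (natDegree_monicLaguerre v u n).le
    (by simp [coeff_monicLaguerre])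

lemma coeff_monicLaguerre_ne_zero (hne : ∀ i, 1 ≤ i → apTerm v u i ≠ 0) {j : ℕ} (hj : j ≤ n) :
    (monicLaguerre v u n).coeff j ≠ 0 := by
  rw [coeff_monicLaguerre]
  exact mul_ne_zero (by exact_mod_cast (Nat.choose_pos hj).ne') <|
    Finset.prod_ne_zero_iff.2 fun i hi => hne i (Nat.one_le_of_lt (mem_Ioc.1 hi).1)

lemma choose_mul_coeff_zero_monicLaguerre {j : ℕ} (hj : j ≤ n) :
    (n.choose j : ℤ) * (monicLaguerre v u n).coeff 0 =
      (monicLaguerre v u n).coeff j * ∏ i ∈ Ioc 0 j, apTerm v u i := by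
  rw [coeff_monicLaguerre, coeff_monicLaguerre, ← prod_Ioc_consecutive _ (Nat.zero_le j) hj,
    Nat.choose_zero_right]
  push_cast
  ring

lemma padicValInt_coeff_zero_monicLaguerre_le (hne : ∀ i, 1 ≤ i → apTerm v u i ≠ 0) {p : ℕ}
    (hp : p.Prime) {j : ℕ} (hj : j ≤ n) :
    padicValInt p ((monicLaguerre v u n).coeff 0) ≤
      padicValInt p ((monicLaguerre v u n).coeff j) + (apProd v u 0 j).factorization p := by
  have : Fact p.Prime := ⟨hp⟩
  have hnatAbs : (∏ i ∈ Ioc 0 j, apTerm v u i).natAbs = apProd v u 0 j :=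
    map_prod Int.natAbsHom _ _
  have hprod : ∏ i ∈ Ioc 0 j, apTerm v u i ≠ 0 :=
    Int.natAbs_ne_zero.1 (hnatAbs ▸ apProd_ne_zero hne 0 j)
  have hval := congrArg (padicValInt p) (choose_mul_coeff_zero_monicLaguerre (u := u) (v := v) hj)
  rw [padicValInt.mul (by exact_mod_cast (Nat.choose_pos hj).ne')
      (coeff_monicLaguerre_ne_zero hne (Nat.zero_le n)),
    padicValInt.mul (coeff_monicLaguerre_ne_zero hne hj) hprod] at hval
  rw [Nat.factorization_def _ hp, ← hnatAbs, ← padicValInt, ← hval]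
  exact Nat.le_add_left _ _

lemma irreducible_monicLaguerre (hne : ∀ i, 1 ≤ i → apTerm v u i ≠ 0) (hn : n ≠ 0)
    (h : ∀ k, 1 ≤ k → 2 * k ≤ n → ExcludesFactor v u n k) : Irreducible (monicLaguerre v u n) := by
  rw [(monic_monicLaguerre v u n).irreducible_iff_natDegree']
  refine ⟨fun h1 => hn ?_, fun g f hg hf hgf hmem => ?_⟩
  · rw [← natDegree_monicLaguerre v u n, h1, natDegree_one]
  rw [mem_Ioc, natDegree_monicLaguerre] at hmem
  obtain ⟨p, l, hp, hl, hdvd, hslope⟩ := h f.natDegree (by omega) (by omega)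
  rw [mul_comm] at hgf
  have hdeg : f.natDegree + g.natDegree = n := by
    rw [← hf.natDegree_mul hg, hgf, natDegree_monicLaguerre]
  refine not_dvd_coeff_zero_of_slope_lt hp hf hmem.1 (g := g) ?_ ?_
    (dvd_coeff_zero_of_dvd_coeff_mul hp hg (m := n - l) (by omega) (by rwa [hgf]))
  · rw [hgf]
    exact coeff_monicLaguerre_ne_zero hne (Nat.zero_le n)
  · rw [hgf]
    intro j hj hcoeff
    have hjn : j ≤ n := natDegree_monicLaguerre v u n ▸ le_natDegree_of_ne_zero hcoeff
    calc _ ≤ f.natDegree * (padicValInt p ((monicLaguerre v u n).coeff j) +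
          (apProd v u 0 j).factorization p) :=
        Nat.mul_le_mul_left _ (padicValInt_coeff_zero_monicLaguerre_le hne hp hjn)
      _ < _ := by
        rw [mul_add]
        exact Nat.add_lt_add_left (hslope j hj) _

lemma irreducible_comp_C_mul_X {K : Type*} [Field K] {a : K} (ha : a ≠ 0) {f : K[X]}
    (hf : Irreducible f) : Irreducible (f.comp (C a * X)) := by
  let _ : Invertible a := invertibleOfNonzero ha
  have h := (MulEquiv.irreducible_iff (algEquivCMulXAddC a 0)).2 hf
  simpa [algEquivCMulXAddC_apply, aeval_def, comp, eval₂_eq_eval_map] using h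

lemma cast_prod_Ioc_apTerm (hv : v ≠ 0) (u : ℤ) (j d : ℕ) :
    ((∏ i ∈ Ioc j (j + d), apTerm v u i : ℤ) : ℚ) =
      v ^ d * ∏ i ∈ range d, ((u / v : ℚ) + (j + d : ℕ) - i) := by
  have hv' : (v : ℚ) ≠ 0 := Nat.cast_ne_zero.2 hv
  induction d with
  | zero => simp
  | succ d ih =>
    have hshift : ∏ i ∈ range d, ((u / v : ℚ) + (j + (d + 1) : ℕ) - (i + 1 : ℕ)) =
        ∏ i ∈ range d, ((u / v : ℚ) + (j + d : ℕ) - i) :=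
      prod_congr rfl fun i _ => by push_cast; ring
    rw [← add_assoc, prod_Ioc_succ_top (by omega), Int.cast_mul, ih, add_assoc, prod_range_succ',
      hshift, apTerm]
    push_cast
    field_simp
    ring

lemma C_mul_laguerre_eq (hv : v ≠ 0) (u : ℤ) (n : ℕ) :
    C ((n.factorial : ℚ) * v ^ n) * laguerre (u / v) n =
      ((monicLaguerre v u n).map (algebraMap ℤ ℚ)).comp (C (-v : ℚ) * X) := by
  rw [laguerre, monicLaguerre, Polynomial.map_sum, Polynomial.sum_comp, mul_sum]
  refine sum_congr rfl fun j hj => ?_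
  obtain ⟨d, rfl⟩ := Nat.exists_eq_add_of_le (Nat.lt_succ_iff.1 (mem_range.1 hj))
  rw [Polynomial.map_mul, Polynomial.map_pow, map_X, map_C, mul_comp, C_comp, X_pow_comp, mul_pow,
    ← C_pow, ← mul_assoc, ← mul_assoc, ← C_mul, ← C_mul]
  congr 2
  rw [algebraMap_int_eq, eq_intCast, Int.cast_mul, cast_prod_Ioc_apTerm hv, Int.cast_natCast,
    Nat.add_sub_cancel_left, Nat.cast_add_choose, neg_pow (v : ℚ) j, pow_add]
  generalize ∏ i ∈ range d, ((u / v : ℚ) + (j + d : ℕ) - i) = P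
  have hfactorial (m : ℕ) : (m.factorial : ℚ) ≠ 0 := Nat.cast_ne_zero.2 m.factorial_ne_zero
  field_simp [hfactorial]

lemma irreducible_laguerre_of_irreducible_monicLaguerre (hv : v ≠ 0)
    (h : Irreducible (monicLaguerre v u n)) : Irreducible (laguerre (u / v) n) := by
  have hv' : (v : ℚ) ≠ 0 := Nat.cast_ne_zero.2 hv
  have hmap : Irreducible ((monicLaguerre v u n).map (algebraMap ℤ ℚ)) :=
    (monic_monicLaguerre v u n).irreducible_iff_irreducible_map_fraction_map.1 h
  have hcomp := irreducible_comp_C_mul_X (neg_ne_zero.2 hv') hmap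
  rw [← C_mul_laguerre_eq hv] at hcomp
  refine (irreducible_isUnit_mul (isUnit_C.2 (IsUnit.mk0 _ ?_))).1 hcomp
  have := n.factorial_ne_zero
  positivity

lemma dvd_coeff_monicLaguerre_of_dvd_apTerm {p i : ℕ} (hi : i ≤ n) (h : (p : ℤ) ∣ apTerm v u i)
    {j : ℕ} (hj : j < i) : (p : ℤ) ∣ (monicLaguerre v u n).coeff j := by
  rw [coeff_monicLaguerre]
  exact (h.trans (Finset.dvd_prod_of_mem _ (mem_Ioc.2 ⟨hj, hi⟩))).mul_left _

/- If `p ∣ n` does not divide `n.choose j`, it divides `n - j`, so that `(j, n]` contains a full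
residue system modulo `p`. -/
lemma dvd_coeff_monicLaguerre_of_dvd {p : ℕ} (hp : p.Prime) (hpv : ¬ p ∣ v) (h : p ∣ n) {j : ℕ}
    (hj : j < n) : (p : ℤ) ∣ (monicLaguerre v u n).coeff j := by
  by_cases hc : p ∣ n.choose j
  · rw [coeff_monicLaguerre]
    exact (Int.natCast_dvd_natCast.2 hc).mul_right _
  have hmul : n.choose j * (n - j) = n * (n - 1).choose j := by
    obtain ⟨m, rfl⟩ := Nat.exists_eq_add_of_lt hj
    rw [← Nat.choose_mul_succ_eq, Nat.add_sub_cancel, mul_comm]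
  have hpj : p ∣ n - j := (hp.dvd_mul.1 (hmul ▸ h.mul_right _)).resolve_left hc
  have hle : p ≤ n - j := Nat.le_of_dvd (by omega) hpj
  have hpos : apCount v u p j n ≠ 0 := by
    intro h0
    have := (abs_lt.1 (abs_mul_apCount_sub_lt u hp.pos (hp.coprime_iff_not_dvd.2 hpv) hj.le)).1
    rw [h0] at this
    omega
  obtain ⟨i, hi⟩ := card_ne_zero.1 hpos
  rw [mem_filter, mem_Ioc] at hi
  exact dvd_coeff_monicLaguerre_of_dvd_apTerm hi.1.2 hi.2 hi.1.1

end MonicLaguerre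

section ExcludedFactors

variable {v : ℕ} {u : ℤ} {n k p i : ℕ}

lemma excludesFactor_of_dvd_apTerm (hp : p.Prime) (hi : i ∈ Ioc (n - k) n)
    (h : (p : ℤ) ∣ apTerm v u i) (hslope : ∀ j, 1 ≤ j → k * (apProd v u 0 j).factorization p < j) :
    ExcludesFactor v u n k := by
  rw [mem_Ioc] at hi
  exact ⟨p, n - i, hp, by omega, fun j hj =>
    dvd_coeff_monicLaguerre_of_dvd_apTerm hi.2 h (by omega), hslope⟩

lemma exists_eventually_excludesFactor_of_le (hv : 1 ≤ v) (huv : IsCoprime (v : ℤ) u)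
    (hne : ∀ i, 1 ≤ i → apTerm v u i ≠ 0) :
    ∃ k₀, ∀ᶠ n in Filter.atTop, ∀ k, k₀ ≤ k → 2 * k ≤ n → ExcludesFactor v u n k := by
  obtain ⟨k₀, n₀, h⟩ := exists_prime_dvd_apProd hv huv hne (1 + v + u.natAbs)
  refine ⟨k₀, Filter.eventually_atTop.2 ⟨n₀, fun n hn k hk hkn => ?_⟩⟩
  obtain ⟨p, hp, hkp, hdvd, hndvd⟩ := h k n hk hn hkn
  have hpv : ¬ p ∣ v := fun hpv => not_dvd_apProd_of_dvd_left huv hp hpv _ _ hdvd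
  obtain ⟨i, hi, hpi⟩ := exists_dvd_apTerm_of_dvd_apProd hp hdvd
  exact excludesFactor_of_dvd_apTerm hp hi hpi fun j hj =>
    mul_factorization_apProd_lt hne hp hpv rfl hkp hndvd hj

lemma not_dvd_of_mul_add_lt (hv : 1 ≤ v) (h : v * (k + (1 + v + u.natAbs)) + u.natAbs < p) :
    ¬ p ∣ v := fun hpv => by
  have := Nat.le_of_dvd hv hpv
  have := Nat.le_mul_of_pos_left (k + (1 + v + u.natAbs)) hv
  omega

lemma mul_factorization_apProd_lt_of_mul_add_lt (hv : 1 ≤ v)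
    (hne : ∀ i, 1 ≤ i → apTerm v u i ≠ 0) (hp : p.Prime)
    (h : v * (k + (1 + v + u.natAbs)) + u.natAbs < p) {j : ℕ} (hj : 1 ≤ j) :
    k * (apProd v u 0 j).factorization p < j := by
  have := Nat.le_mul_of_pos_left (k + (1 + v + u.natAbs)) hv
  exact mul_factorization_apProd_lt hne hp (not_dvd_of_mul_add_lt hv h) rfl (by omega)
    (not_dvd_apProd_of_lt hne hp h) hj

lemma eventually_exists_prime_dvd_mul_apTerm (hv : v ≠ 0) (hu : u ≠ 0) (B : ℕ) :
    ∀ᶠ n : ℕ in Filter.atTop, ∃ p : ℕ, p.Prime ∧ (p : ℤ) ∣ n * apTerm v u n ∧ B < p := by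
  rw [← Nat.cofinite_eq_atTop]
  filter_upwards [(finite_setOf_forall_prime_dvd_le hv hu B).eventually_cofinite_notMem] with n hn
  simpa using hn

lemma eventually_excludesFactor_of_ne_zero (hv : 1 ≤ v) (hu : u ≠ 0)
    (hne : ∀ i, 1 ≤ i → apTerm v u i ≠ 0) (k₀ : ℕ) :
    ∀ᶠ n in Filter.atTop, ∀ k, 1 ≤ k → k < k₀ → ExcludesFactor v u n k := by
  filter_upwards [eventually_exists_prime_dvd_mul_apTerm (Nat.one_le_iff_ne_zero.1 hv) hu
    (v * (k₀ + (1 + v + u.natAbs)) + u.natAbs), Filter.eventually_ge_atTop 1]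
    with n ⟨p, hp, hdvd, hlt⟩ hn k hk hkk
  have hkp : v * (k + (1 + v + u.natAbs)) + u.natAbs < p := lt_of_le_of_lt (by gcongr) hlt
  have hslope : ∀ j, 1 ≤ j → k * (apProd v u 0 j).factorization p < j := fun j hj =>
    mul_factorization_apProd_lt_of_mul_add_lt hv hne hp hkp hj
  rcases (Nat.prime_iff_prime_int.1 hp).dvd_mul.1 hdvd with h | h
  · exact ⟨p, 0, hp, hk, fun j hj => dvd_coeff_monicLaguerre_of_dvd hp
      (not_dvd_of_mul_add_lt hv hkp) (Int.natCast_dvd_natCast.1 h) hj, hslope⟩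
  · exact excludesFactor_of_dvd_apTerm hp (mem_Ioc.2 ⟨by omega, le_rfl⟩) h hslope

lemma excludesFactor_zero_one (hn : 1 < n) : ExcludesFactor 1 0 n 1 := by
  obtain ⟨q, hq, hqn⟩ := Nat.exists_prime_and_dvd hn.ne'
  refine excludesFactor_of_dvd_apTerm hq (mem_Ioc.2 ⟨by omega, le_rfl⟩)
    (by simpa [apTerm] using Int.natCast_dvd_natCast.2 hqn) fun j hj => ?_
  have hfactorial : apProd 1 0 0 j = j.factorial := by
    simp [apProd, apTerm, ← prod_Ico_id_eq_factorial, ← Ico_add_one_add_one_eq_Ioc]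
  have : Fact q.Prime := ⟨hq⟩
  rw [hfactorial, one_mul, Nat.factorization_def _ hq]
  exact padicValNat_factorial_lt_of_ne_zero q (by omega)

/- For `u = 0` the primes dividing `n` need not be large, but the largest one dividing `n * (n - 1)`
is; the factor `n - 1` is of use only for `k ≥ 2`. -/
lemma eventually_excludesFactor_zero (k₀ : ℕ) :
    ∀ᶠ n in Filter.atTop, ∀ k, 1 ≤ k → k < k₀ → ExcludesFactor 1 0 n k := by
  have hne : ∀ i, 1 ≤ i → apTerm 1 0 i ≠ 0 := fun i hi => by
    simp only [apTerm]
    omega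
  filter_upwards [eventually_exists_prime_dvd_mul_apTerm one_ne_zero
    (neg_ne_zero.2 one_ne_zero) (k₀ + 2), Filter.eventually_gt_atTop 1]
    with n ⟨p, hp, hdvd, hlt⟩ hn k hk hkk
  rcases hk.eq_or_lt with rfl | hk2
  · exact excludesFactor_zero_one hn
  have hslope : ∀ j, 1 ≤ j → k * (apProd 1 0 0 j).factorization p < j := fun j hj =>
    mul_factorization_apProd_lt_of_mul_add_lt le_rfl hne hp (by simp; omega) hj
  rcases (Nat.prime_iff_prime_int.1 hp).dvd_mul.1 hdvd with h | h
  · exact excludesFactor_of_dvd_apTerm hp (i := n) (mem_Ioc.2 ⟨by omega, le_rfl⟩)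
      (by simpa [apTerm] using h) hslope
  · refine excludesFactor_of_dvd_apTerm hp (i := n - 1) (mem_Ioc.2 ⟨by omega, by omega⟩) ?_ hslope
    rwa [show apTerm 1 0 (n - 1) = apTerm 1 (-1) n by simp only [apTerm]; omega]

end ExcludedFactors

lemma apTerm_den_num_ne_zero {ν : ℚ} (hν : ∀ m : ℕ, ν ≠ -((m : ℚ) + 1)) {i : ℕ} (hi : 1 ≤ i) :
    apTerm ν.den ν.num i ≠ 0 := by
  intro h
  have hcast : (ν.den : ℚ) * i + ν.num = 0 := by exact_mod_cast h
  have hden : (ν.den : ℚ) ≠ 0 := Nat.cast_ne_zero.2 ν.den_ne_zero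
  refine hν (i - 1) (mul_left_cancel₀ hden ?_)
  rw [Rat.den_mul_eq_num, Nat.cast_sub hi]
  push_cast
  linear_combination hcast

/-- Filaseta–Lam theorem: if `ν` is a rational number which is not a negative
integer, then for all but finitely many `k ∈ ℤ₊` the Laguerre polynomial
`L_k^ν` is irreducible over `ℚ`. -/
theorem laguerre_irreducible (ν : ℚ) (hν : ∀ m : ℕ, ν ≠ -((m : ℚ) + 1)) :
    {k : ℕ | ¬ Irreducible (laguerre ν k)}.Finite := by
  have hne : ∀ i, 1 ≤ i → apTerm ν.den ν.num i ≠ 0 := fun i hi => apTerm_den_num_ne_zero hν hi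
  obtain ⟨k₀, hlarge⟩ :=
    exists_eventually_excludesFactor_of_le ν.pos (Rat.isCoprime_num_den ν).symm hne
  have hsmall : ∀ᶠ n in Filter.atTop, ∀ k, 1 ≤ k → k < k₀ →
      ExcludesFactor ν.den ν.num n k := by
    rcases eq_or_ne ν 0 with rfl | h0
    · exact eventually_excludesFactor_zero k₀
    · exact eventually_excludesFactor_of_ne_zero ν.pos (Rat.num_ne_zero.2 h0) hne k₀
  rw [← Filter.eventually_cofinite, Nat.cofinite_eq_atTop]
  filter_upwards [hlarge, hsmall, Filter.eventually_ne_atTop 0] with n hlarge hsmall hn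
  rw [← Rat.num_div_den ν]
  refine irreducible_laguerre_of_irreducible_monicLaguerre ν.den_ne_zero
    (irreducible_monicLaguerre hne hn fun k hk hkn => ?_)
  rcases lt_or_ge k k₀ with hk₀ | hk₀
  · exact hsmall k hk hk₀
  · exact hlarge k hk₀ hkn

end
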